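/- arXiv:2309.13768 — 2 statements merged into one kernel-verified Lean document; each statement's English description precedes it below -/
import Mathlib

section
/- Let n ≥ 1 and let k₁,…,kₙ be positive integers; let ρ(z,w) = ∏_{j=1}^n (1 − z_j w_j)^{k_j}, regarded as a polynomial in the 2n+1 variables z₁,…,zₙ, w₁,…,wₙ, η (not involving η). Let a be a nonconstant polynomial in z₁,…,zₙ alone. If a polynomial b in the variables w₁,…,wₙ, η alone divides h(z,w,η) := ρ(z,w) − a(z)·η in ℂ[z₁,…,zₙ, w₁,…,wₙ, η], then b is constant. -/
/-!
Write `ρ(z,w) = ∑ ρₘ(w) zᵐ` and `a(z) = ∑ aₘ zᵐ`. A polynomial `b(w,η)` divides `ρ - aη` if and only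
if it divides every coefficient `ρₘ(w) - aₘη`. Since `ρ(0,w) = 1`, the coefficient at `m = 0` is
`1 - a₀η`, a nonzero polynomial in `η` alone. Choose `m ≠ 0` with `aₘ ≠ 0`. Eliminating `η` from the
coefficients at `0` and `m` shows that `b` divides `aₘ - a₀ρₘ(w)`, a polynomial in `w` alone, which
is nonzero because `ρ(z,0) = 1` forces `ρₘ(0) = 0`. A common divisor of nonzero polynomials in
disjoint sets of variables is constant.
-/

noncomputable section

open MvPolynomial

/-- The complexified generic norm `ρ(z,w) = ∏_j (1 − z_j w_j)^{k_j}` of the polydisc, as a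
polynomial in the `2n+1` variables `z₁,…,zₙ, w₁,…,wₙ, η` (not involving `η`): the `z`
variables are indexed by `Sum.inl j`, the `w` variables by `Sum.inr (Sum.inl j)`, and `η`
by `Sum.inr (Sum.inr ())`. -/
def rhoPoly (n : ℕ) (k : Fin n → ℕ) : MvPolynomial (Fin n ⊕ (Fin n ⊕ Unit)) ℂ :=
  ∏ j, (1 - X (Sum.inl j) * X (Sum.inr (Sum.inl j))) ^ (k j)

section CommSemiring

variable {R σ τ υ : Type*} [CommSemiring R]

theorem sumAlgEquiv_rename_inr (p : MvPolynomial τ R) :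
    sumAlgEquiv R σ τ (rename Sum.inr p) = C p :=
  DFunLike.congr_fun (sumAlgEquiv_comp_rename_inr R σ τ) p

theorem sumAlgEquiv_rename_inl (p : MvPolynomial σ R) :
    sumAlgEquiv R σ τ (rename Sum.inl p) = map C p :=
  DFunLike.congr_fun (sumAlgEquiv_comp_rename_inl R σ τ) p

theorem sumAlgEquiv_rename_map_id_inl (p : MvPolynomial (σ ⊕ τ) R) :
    sumAlgEquiv R σ (τ ⊕ υ) (rename (Sum.map id Sum.inl) p) =
      mapAlgHom (rename Sum.inl) (sumAlgEquiv R σ τ p) := by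
  have h : (sumAlgEquiv R σ (τ ⊕ υ)).toAlgHom.comp (rename (Sum.map id Sum.inl)) =
      (mapAlgHom (rename Sum.inl)).comp (sumAlgEquiv R σ τ).toAlgHom := by
    ext (i | i) <;> simp
  exact DFunLike.congr_fun h p

theorem coeff_zero_sumAlgEquiv (p : MvPolynomial (σ ⊕ τ) R) :
    coeff 0 (sumAlgEquiv R σ τ p) = aeval (Sum.elim 0 X) p := by
  induction p using MvPolynomial.induction_on with
  | C r => simp
  | add p q hp hq => simp [hp, hq]
  | mul_X p i hp =>
    rw [← constantCoeff_eq] at hp ⊢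
    rcases i with i | i <;> simp [hp]

theorem map_constantCoeff_sumAlgEquiv (p : MvPolynomial (σ ⊕ τ) R) :
    map constantCoeff (sumAlgEquiv R σ τ p) = aeval (Sum.elim X 0) p := by
  induction p using MvPolynomial.induction_on with
  | C r => simp
  | add p q hp hq => simp [hp, hq]
  | mul_X p i hp => rcases i with i | i <;> simp [hp]

theorem rename_inr_dvd_iff_dvd_coeff {q : MvPolynomial τ R} {p : MvPolynomial (σ ⊕ τ) R} :
    rename Sum.inr q ∣ p ↔ ∀ m, q ∣ coeff m (sumAlgEquiv R σ τ p) := by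
  rw [← map_dvd_iff (sumAlgEquiv R σ τ), sumAlgEquiv_rename_inr, C_dvd_iff_dvd_coeff]

theorem exists_ne_zero_coeff_ne_zero {p : MvPolynomial σ R} (hp : ¬ ∃ c, p = C c) :
    ∃ m ≠ 0, coeff m p ≠ 0 := by
  classical
  by_contra! h
  refine hp ⟨coeff 0 p, MvPolynomial.ext _ _ fun m => ?_⟩
  rw [coeff_C]
  split_ifs with hm
  · rw [hm]
  · exact h m (Ne.symm hm)

theorem exists_eq_rename_inr_of_dvd_rename_inr [NoZeroDivisors R]
    {p : MvPolynomial (σ ⊕ τ) R} {q : MvPolynomial τ R}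
    (hq : q ≠ 0) (h : p ∣ rename Sum.inr q) : ∃ r, p = rename Sum.inr r := by
  rw [← map_dvd_iff (sumAlgEquiv R σ τ), sumAlgEquiv_rename_inr, dvd_C_iff_exists hq] at h
  obtain ⟨r, -, hr⟩ := h
  exact ⟨r, (sumAlgEquiv R σ τ).injective (by rw [hr, sumAlgEquiv_rename_inr])⟩

theorem exists_eq_C_of_dvd_rename_inl_of_dvd_rename_inr [NoZeroDivisors R]
    {b : MvPolynomial (σ ⊕ τ) R} {p : MvPolynomial σ R} {q : MvPolynomial τ R}
    (hp : p ≠ 0) (hq : q ≠ 0) (hbp : b ∣ rename Sum.inl p) (hbq : b ∣ rename Sum.inr q) :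
    ∃ c, b = C c := by
  obtain ⟨r, rfl⟩ := exists_eq_rename_inr_of_dvd_rename_inr hq hbq
  obtain ⟨m, hm⟩ := ne_zero_iff.mp hp
  have hr : r ∣ C (coeff m p) := by
    simpa only [sumAlgEquiv_rename_inl, coeff_map] using rename_inr_dvd_iff_dvd_coeff.mp hbp m
  obtain ⟨c, -, rfl⟩ := (dvd_C_iff_exists hm).mp hr
  exact ⟨c, rename_C _ c⟩

end CommSemiring

theorem dvd_coeff_sub_C_mul_of_rename_inr_dvd {R σ τ υ : Type*} [CommRing R]
    {ρ : MvPolynomial (σ ⊕ τ) R} {a : MvPolynomial σ R} {b : MvPolynomial (τ ⊕ υ) R} {η : υ}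
    (h : rename Sum.inr b ∣
      rename (Sum.map id Sum.inl) ρ - rename Sum.inl a * X (Sum.inr (Sum.inr η)))
    (m : σ →₀ ℕ) :
    b ∣ rename Sum.inl (coeff m (sumAlgEquiv R σ τ ρ)) - C (coeff m a) * X (Sum.inr η) := by
  have hm := rename_inr_dvd_iff_dvd_coeff.mp h m
  rw [mul_comm] at hm ⊢
  simpa [sumAlgEquiv_rename_map_id_inl, sumAlgEquiv_rename_inl, coeff_map] using hm

section PolydiscNorm

variable {ι : Type*} [Fintype ι]

/-- The complexified generic norm `∏ j, (1 - z_j w_j) ^ k j` of the polydisc over an arbitrary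
coefficient ring. Unlike `rhoPoly`, it is a polynomial in `(z, w)` without `η`, so that it can be
restricted to `z = 0` and to `w = 0`; `z_j` and `w_j` are indexed by `Sum.inl j` and `Sum.inr j`. -/
def polydiscNorm (R : Type*) [CommRing R] (k : ι → ℕ) : MvPolynomial (ι ⊕ ι) R :=
  ∏ j, (1 - X (Sum.inl j) * X (Sum.inr j)) ^ k j

variable {R : Type*} [CommRing R] (k : ι → ℕ)

theorem aeval_zero_left_polydiscNorm :
    aeval (Sum.elim 0 X) (polydiscNorm R k) = (1 : MvPolynomial ι R) := by
  simp [polydiscNorm]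

theorem aeval_zero_right_polydiscNorm :
    aeval (Sum.elim X 0) (polydiscNorm R k) = (1 : MvPolynomial ι R) := by
  simp [polydiscNorm]

end PolydiscNorm

theorem rhoPoly_eq_rename_polydiscNorm (n : ℕ) (k : Fin n → ℕ) :
    rhoPoly n k = rename (Sum.map id Sum.inl) (polydiscNorm ℂ k) := by
  simp [rhoPoly, polydiscNorm]

theorem no_nonconstant_factor_in_w_eta_general {R σ τ : Type*} [CommRing R] [IsDomain R]
    {ρ : MvPolynomial (σ ⊕ τ) R}
    (hρw : aeval (Sum.elim 0 X) ρ = (1 : MvPolynomial τ R))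
    (hρz : aeval (Sum.elim X 0) ρ = (1 : MvPolynomial σ R))
    {a : MvPolynomial σ R} (ha : ¬ ∃ c, a = C c) {b : MvPolynomial (τ ⊕ Unit) R}
    (hdvd : rename Sum.inr b ∣
      rename (Sum.map id Sum.inl) ρ - rename Sum.inl a * X (Sum.inr (Sum.inr ()))) :
    ∃ c, b = C c := by
  obtain ⟨m, hm, ham⟩ := exists_ne_zero_coeff_ne_zero ha
  set ρm := coeff m (sumAlgEquiv R σ τ ρ)
  have hρm : constantCoeff ρm = 0 := by
    classical
    rw [← coeff_map, map_constantCoeff_sumAlgEquiv, hρz, coeff_one, if_neg hm.symm]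
  have hb_zero : b ∣ 1 - C (coeff 0 a) * X (Sum.inr ()) := by
    simpa only [coeff_zero_sumAlgEquiv, hρw, map_one] using
      dvd_coeff_sub_C_mul_of_rename_inr_dvd hdvd 0
  have hb_m : b ∣ rename Sum.inl ρm - C (coeff m a) * X (Sum.inr ()) :=
    dvd_coeff_sub_C_mul_of_rename_inr_dvd hdvd m
  have hb_w : b ∣ rename Sum.inl (C (coeff m a) - C (coeff 0 a) * ρm) := by
    convert dvd_sub (hb_zero.mul_left (C (coeff m a))) (hb_m.mul_left (C (coeff 0 a))) using 1
    simp only [map_sub, map_mul, rename_C]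
    ring
  have hb_η : b ∣ rename Sum.inr (1 - C (coeff 0 a) * X ()) := by
    simpa only [map_sub, map_one, map_mul, rename_C, rename_X] using hb_zero
  refine exists_eq_C_of_dvd_rename_inl_of_dvd_rename_inr (fun h => ham ?_) (fun h => ?_) hb_w hb_η
  · simpa [hρm] using congrArg constantCoeff h
  · simpa using congrArg constantCoeff h

/-- The key algebraic claim in the proof of Lemma 3.3 of the paper, specialized to the
polydisc: if `a(z)` is a nonconstant polynomial in `z` alone and a polynomial `b(w,η)` in
`(w,η)` alone divides `ρ(z,w) − a(z)·η`, then `b` is constant. -/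
theorem no_nonconstant_factor_in_w_eta (n : ℕ) (hn : 1 ≤ n)
    (k : Fin n → ℕ) (hk : ∀ j, 0 < k j)
    (a : MvPolynomial (Fin n) ℂ) (ha : ¬ ∃ c : ℂ, a = MvPolynomial.C c)
    (b : MvPolynomial (Fin n ⊕ Unit) ℂ)
    (hdvd : (MvPolynomial.rename Sum.inr b) ∣
      (rhoPoly n k -
        (MvPolynomial.rename Sum.inl a) * X (Sum.inr (Sum.inr ())))) :
    ∃ c : ℂ, b = MvPolynomial.C c := by
  rw [rhoPoly_eq_rename_polydiscNorm] at hdvd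
  exact no_nonconstant_factor_in_w_eta_general (aeval_zero_left_polydiscNorm k)
    (aeval_zero_right_polydiscNorm k) ha hdvd
end
end

section
/- Let p, q be integers with min(p,q) ≥ 2 and let λ be a positive real number. Let Ω = {Z ∈ M_{p×q}(ℂ) : I_p − Z Z^H is positive definite} with generic norm N(Z) = det(I_p − Z Z^H), and let M = {(Z,ξ) ∈ Ω × ℂ : |ξ|² = N(Z)^λ}, where the real power of the positive real N(Z) is used. Let U ⊆ M_{p×q}(ℂ) × ℂ be a connected open set with U ∩ M ≠ ∅ and let F : U → M_{p×q}(ℂ) × ℂ be a nonconstant holomorphic map with F(U ∩ M) ⊆ M. Then there exist a biholomorphism ψ : Ω → Ω and a holomorphic function h : Ω → ℂ with h(Z) ≠ 0 for all Z ∈ Ω, such that det(I_p − ψ(Z)ψ(Z)^H)^λ = |h(Z)|²·det(I_p − Z Z^H)^λ for all Z ∈ Ω, and the map (Z,ξ) ↦ (ψ(Z), ξ·h(Z)) coincides with F on some nonempty open subset of U. -/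
/-!
The substitution `ξ = exp (λ ω)` turns `M` into the tube `2 Re ω = log N(Z)`, and `F` lifts to a
germ preserving the tube. Automorphisms of `Ω` act on the tube, so the germ may be assumed to fix
the origin. Polarizing the equation of the tube gives a holomorphic identity in independent
variables `(Z, ω)` and `(Y, τ)`, linking the germ to its complex conjugate. Its Taylor expansion at
the origin shows that the derivative of the germ is a similitude of the trace form on the complex
tangent space, and the rank hypothesis enters through the quartic part: either the derivative
vanishes on the complex tangent space, or it has no component along `Z` in the fibre direction.
The first case cannot hold along the whole tube, whose Levi form is nondegenerate, unless the germ
is constant. Near a point where the second case holds, the germ is `(Z, ω) ↦ (A Z, γ ω)` in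
normalized coordinates with `A` linear and `N(A Z) = N(Z) ^ γ`. Restricting to a line shows
`γ = 1`, so `A` is an automorphism of `Ω`, and undoing the normalizations and the exponential
gives `F`.
-/

noncomputable section

open Complex Matrix
open scoped ComplexOrder

/-- `Biholo f s t`: `f` is a biholomorphism from `s` onto `t`. -/
def Biholo {E F : Type*} [NormedAddCommGroup E] [NormedSpace ℂ E]
    [NormedAddCommGroup F] [NormedSpace ℂ F]
    (f : E → F) (s : Set E) (t : Set F) : Prop :=
  DifferentiableOn ℂ f s ∧ Set.MapsTo f s t ∧
    ∃ g : F → E, DifferentiableOn ℂ g t ∧ Set.MapsTo g t s ∧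
      Set.LeftInvOn g f s ∧ Set.RightInvOn g f t

/-- The type I classical domain `D^I_{p,q} = {Z : I_p − Z Zᴴ is positive definite}`,
with `p × q` matrices identified with `Fin p → Fin q → ℂ`. -/
def typeIDomain (p q : ℕ) : Set (Fin p → Fin q → ℂ) :=
  {Z | ((1 : Matrix (Fin p) (Fin p) ℂ) - Matrix.of Z * (Matrix.of Z)ᴴ).PosDef}

/-- The generic norm `N(Z) = det(I_p − Z Zᴴ)` of the type I domain (its real part;
the determinant is real on the domain since `I_p − Z Zᴴ` is Hermitian). -/
def genNormI {p q : ℕ} (Z : Fin p → Fin q → ℂ) : ℝ :=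
  (((1 : Matrix (Fin p) (Fin p) ℂ) - Matrix.of Z * (Matrix.of Z)ᴴ).det).re

/-- The circle bundle `M = {(Z,ξ) ∈ Ω × ℂ : |ξ|² = N(Z)^λ}` (real power). -/
def circTypeIPow (p q : ℕ) (lam : ℝ) : Set ((Fin p → Fin q → ℂ) × ℂ) :=
  {P | P.1 ∈ typeIDomain p q ∧ Complex.normSq P.2 = genNormI P.1 ^ lam}

section

open Filter Topology Metric Set

section SeveralVariables

variable {E W : Type*} [NormedAddCommGroup E] [NormedSpace ℂ E]
  [NormedAddCommGroup W] [NormedSpace ℂ W]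

lemma norm_fderiv_le_of_forall_norm_le {f : E → W} {c : E} {r C : ℝ} (hr : 0 < r)
    (hf : DifferentiableOn ℂ f (ball c r)) (hC : ∀ z ∈ ball c r, ‖f z‖ ≤ C) :
    ‖fderiv ℂ f c‖ ≤ 2 * C / r := by
  refine norm_fderiv_le_div_of_mapsTo_ball hf (fun z hz => ?_) hr
  rw [mem_closedBall, dist_eq_norm]
  linarith [norm_sub_le (f z) (f c), hC z hz, hC c (mem_ball_self hr)]

lemma differentiableOn_of_tendstoUniformlyOn [CompleteSpace W] {ι : Type*} {l : Filter ι}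
    [l.NeBot] {g : ι → E → W} {G : E → W} {U : Set E} (hU : IsOpen U)
    (hg : ∀ᶠ i in l, DifferentiableOn ℂ (g i) U) (hlim : TendstoUniformlyOn g G l U) :
    DifferentiableOn ℂ G U := by
  intro c hc
  obtain ⟨R, hR, hRU⟩ := Metric.isOpen_iff.1 hU c hc
  obtain ⟨r, hr, rfl⟩ : ∃ r > 0, R = 2 * r := ⟨R / 2, half_pos hR, by ring⟩
  have hball : ∀ x ∈ ball c r, ball x r ⊆ U := fun x hx =>
    (ball_subset_ball' (by linarith [mem_ball.1 hx])).trans hRU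
  have hdiff : ∀ i, DifferentiableOn ℂ (g i) U → ∀ x ∈ ball c r, DifferentiableAt ℂ (g i) x :=
    fun i hi x hx => hi.differentiableAt (hU.mem_nhds (hball x hx (mem_ball_self hr)))
  have hcauchy : UniformCauchySeqOn (fun i => fderiv ℂ (g i)) l (ball c r) := by
    intro u hu
    obtain ⟨ε, hε, hεu⟩ := Metric.mem_uniformity_dist.1 hu
    filter_upwards [hlim.uniformCauchySeqOn _ (Metric.dist_mem_uniformity
      (show 0 < ε * r / 4 by positivity)), hg.prod_mk hg] with ⟨i, j⟩ hij ⟨hi, hj⟩ x hx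
    refine hεu ?_
    rw [dist_eq_norm, ← fderiv_sub (hdiff i hi x hx) (hdiff j hj x hx)]
    refine (norm_fderiv_le_of_forall_norm_le (C := ε * r / 4) hr ((hi.sub hj).mono (hball x hx))
      fun z hz => ?_).trans_lt ?_
    · simpa [dist_eq_norm] using (hij z (hball x hx hz)).le
    · field_simp
      linarith
  choose! L hL using fun x hx =>
    cauchy_map_iff_exists_tendsto.1 (hcauchy.cauchy_map (x := x) hx)
  have hc' : ball c r ∈ 𝓝 c := ball_mem_nhds c hr
  refine (hasFDerivAt_of_tendstoUniformlyOnFilter (l := l) (f := g) (g' := L)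
    (f' := fun i => fderiv ℂ (g i)) ?_ ?_ ?_
    ).differentiableAt.differentiableWithinAt
  · exact ((tendstoUniformlyOn_iff_tendstoUniformlyOnFilter.1
      (hcauchy.tendstoUniformlyOn_of_tendsto hL))).mono_right (le_principal_iff.2 hc')
  · filter_upwards [hg.prod_mk hc'] with ⟨i, x⟩ ⟨hi, hx⟩
    exact (hdiff i hi x hx).hasFDerivAt
  · filter_upwards [hc'] with x hx
    exact hlim.tendsto_at (hball x hx (mem_ball_self hr))

lemma exists_ball_norm_fderiv_le {f : E → W} {c : E}
    (hf : ∀ᶠ x in 𝓝 c, DifferentiableAt ℂ f x) :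
    ∃ r > 0, ∃ M, ∀ x ∈ ball c r, DifferentiableAt ℂ f x ∧ ‖fderiv ℂ f x‖ ≤ M := by
  have hbound : ∀ᶠ x in 𝓝 c, ‖f x‖ < ‖f c‖ + 1 :=
    hf.self_of_nhds.continuousAt.norm.eventually_lt_const (lt_add_one _)
  obtain ⟨R, hR, hball⟩ := Metric.eventually_nhds_iff_ball.1 (hf.and hbound)
  refine ⟨R / 2, half_pos hR, 2 * (‖f c‖ + 1) / (R / 2), fun x hx => ?_⟩
  have hsub : ball x (R / 2) ⊆ ball c R :=
    ball_subset_ball' (by linarith [mem_ball.1 hx])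
  exact ⟨(hball x (hsub (mem_ball_self (half_pos hR)))).1,
    norm_fderiv_le_of_forall_norm_le (half_pos hR)
      (fun z hz => (hball z (hsub hz)).1.differentiableWithinAt)
      fun z hz => (hball z (hsub hz)).2.le⟩

/- Cauchy's estimate for the increment `z ↦ f (z + (y - x)) - f z`, which is `O(‖y - x‖)`. -/
lemma exists_lipschitzOnWith_fderiv {f : E → W} {c : E}
    (hf : ∀ᶠ x in 𝓝 c, DifferentiableAt ℂ f x) :
    ∃ r > 0, ∃ K, (∀ x ∈ ball c r, DifferentiableAt ℂ f x) ∧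
      LipschitzOnWith K (fderiv ℂ f) (ball c r) := by
  obtain ⟨R, hR, M, hM⟩ := exists_ball_norm_fderiv_le hf
  obtain ⟨r, hr, rfl⟩ : ∃ r > 0, R = 4 * r := ⟨R / 4, by positivity, by ring⟩
  have hlip : ∀ x ∈ ball c (4 * r), ∀ y ∈ ball c (4 * r), ‖f y - f x‖ ≤ M * ‖y - x‖ :=
    fun x hx y hy => (convex_ball c (4 * r)).norm_image_sub_le_of_norm_fderiv_le (𝕜 := ℂ)
      (fun z hz => (hM z hz).1) (fun z hz => (hM z hz).2) hx hy
  have hM0 : 0 ≤ M := (norm_nonneg _).trans (hM c (mem_ball_self hR)).2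
  refine ⟨r, hr, (2 * M / r).toNNReal,
    fun x hx => (hM x (ball_subset_ball (by linarith) hx)).1,
    LipschitzOnWith.of_dist_le_mul fun y hy x hx => ?_⟩
  have hshift : ∀ z ∈ ball x r, z ∈ ball c (4 * r) ∧ z + (y - x) ∈ ball c (4 * r) := by
    intro z hz
    have hyx : dist (z + (y - x)) z < 2 * r := by
      rw [dist_eq_norm, add_sub_cancel_left, ← dist_eq_norm]
      linarith [dist_triangle_right y x c, mem_ball.1 hx, mem_ball.1 hy]
    have hzc : dist z c < 2 * r := by
      linarith [dist_triangle z x c, mem_ball.1 hx, mem_ball.1 hz]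
    constructor <;> rw [mem_ball] <;> linarith [dist_triangle (z + (y - x)) z c]
  have hdiff : ∀ z ∈ ball x r, DifferentiableAt ℂ (fun z => f (z + (y - x))) z := fun z hz =>
    (hM _ (hshift z hz).2).1.comp z (f := fun z => z + (y - x)) (by fun_prop)
  have hcauchy := norm_fderiv_le_of_forall_norm_le (f := fun z => f (z + (y - x)) - f z)
    (C := M * ‖y - x‖) hr
    (fun z hz => ((hdiff z hz).sub (hM z (hshift z hz).1).1).differentiableWithinAt)
    fun z hz => by simpa using hlip z (hshift z hz).1 _ (hshift z hz).2
  have hx' := mem_ball_self (x := x) hr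
  rw [fderiv_fun_sub (hdiff x hx') (hM x (hshift x hx').1).1, fderiv_comp_add_right,
    add_sub_cancel] at hcauchy
  rw [dist_eq_norm, dist_eq_norm]
  exact hcauchy.trans_eq (by rw [Real.coe_toNNReal _ (by positivity)]; ring)

lemma hasStrictFDerivAt_of_eventually_differentiableAt {f : E → W} {c : E}
    (hf : ∀ᶠ x in 𝓝 c, DifferentiableAt ℂ f x) : HasStrictFDerivAt f (fderiv ℂ f c) c := by
  obtain ⟨r, hr, K, -, hK⟩ := exists_lipschitzOnWith_fderiv hf
  exact hasStrictFDerivAt_of_hasFDerivAt_of_continuousAt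
    (hf.mono fun x hx => hx.hasFDerivAt) (hK.continuousOn.continuousAt (ball_mem_nhds c hr))

lemma norm_sub_sub_fderiv_le {f : E → W} {s : Set E} {K : NNReal} (hs : Convex ℝ s)
    (hf : ∀ x ∈ s, DifferentiableAt ℂ f x) (hK : LipschitzOnWith K (fderiv ℂ f) s)
    {x y : E} (hx : x ∈ s) (hy : y ∈ s) :
    ‖f y - f x - fderiv ℂ f x (y - x)‖ ≤ K * ‖y - x‖ * ‖y - x‖ := by
  have hseg : segment ℝ x y ⊆ s := hs.segment_subset hx hy
  refine (convex_segment x y).norm_image_sub_le_of_norm_fderiv_le' (𝕜 := ℂ)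
    (fun z hz => hf z (hseg hz)) (fun z hz => ?_) (left_mem_segment ℝ x y)
    (right_mem_segment ℝ x y)
  calc ‖fderiv ℂ f z - fderiv ℂ f x‖ ≤ K * ‖z - x‖ := hK.norm_sub_le (hseg hz) hx
    _ ≤ K * ‖y - x‖ := by gcongr; exact norm_sub_le_of_mem_segment hz

lemma differentiableAt_fderiv_apply [CompleteSpace W] {f : E → W} {c : E}
    (hf : ∀ᶠ x in 𝓝 c, DifferentiableAt ℂ f x) (v : E) :
    DifferentiableAt ℂ (fun x => fderiv ℂ f x v) c := by
  obtain ⟨r, hr, K, hd, hK⟩ := exists_lipschitzOnWith_fderiv hf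
  have hsub : ball c (r / 2) ⊆ ball c r := ball_subset_ball (by linarith)
  have hadd : ∀ᶠ t : ℂ in 𝓝[≠] 0, ∀ x ∈ ball c (r / 2), x + t • v ∈ ball c r := by
    have hcont : Continuous fun t : ℂ => ‖t • v‖ := by fun_prop
    filter_upwards [nhdsWithin_le_nhds (hcont.continuousAt.eventually_lt_const
      (show ‖(0 : ℂ) • v‖ < r / 2 by simpa using hr))] with t ht x hx
    rw [mem_ball, dist_eq_norm] at hx ⊢
    rw [add_sub_right_comm]
    linarith [norm_add_le (x - c) (t • v)]
  refine (differentiableOn_of_tendstoUniformlyOn (l := 𝓝[≠] 0)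
    (g := fun (t : ℂ) x => t⁻¹ • (f (x + t • v) - f x)) isOpen_ball ?_ ?_).differentiableAt
    (ball_mem_nhds c (half_pos hr))
  · filter_upwards [hadd] with t ht x hx
    exact ((((hd _ (ht x hx)).comp x (f := fun z => z + t • v) (by fun_prop)).sub
      (hd x (hsub hx))).const_smul _).differentiableWithinAt
  · rw [Metric.tendstoUniformlyOn_iff]
    intro ε hε
    have hcont : Continuous fun t : ℂ => ‖t‖ * (K * ‖v‖ * ‖v‖) := by fun_prop
    filter_upwards [hadd, self_mem_nhdsWithin, nhdsWithin_le_nhds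
      (hcont.continuousAt.eventually_lt_const
        (show ‖(0 : ℂ)‖ * (K * ‖v‖ * ‖v‖) < ε by simpa using hε))] with t ht ht0 hε' x hx
    have htaylor := norm_sub_sub_fderiv_le (convex_ball c r) hd hK (hsub hx) (ht x hx)
    rw [add_sub_cancel_left, map_smul, norm_smul] at htaylor
    have hquot : t⁻¹ • (f (x + t • v) - f x) - fderiv ℂ f x v
        = t⁻¹ • (f (x + t • v) - f x - t • fderiv ℂ f x v) := by
      rw [smul_sub _ _ (t • _), inv_smul_smul₀ ht0]
    rw [dist_comm, dist_eq_norm, hquot, norm_smul, norm_inv]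
    refine lt_of_le_of_lt ?_ hε'
    rw [inv_mul_le_iff₀ (norm_pos_iff.2 ht0)]
    exact htaylor.trans_eq (by ring)

lemma eqOn_of_convex_of_eventuallyEq [CompleteSpace W] {f g : E → W} {s : Set E} (ho : IsOpen s)
    (hs : Convex ℝ s) (hf : DifferentiableOn ℂ f s) (hg : DifferentiableOn ℂ g s) {y : E}
    (hy : y ∈ s) (hfg : f =ᶠ[𝓝 y] g) : EqOn f g s := by
  intro z hz
  let line : ℂ → E := fun ζ => y + ζ • (z - y)
  have hline : Differentiable ℂ line := by fun_prop
  have hanalytic : ∀ {h : E → W}, DifferentiableOn ℂ h s →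
      AnalyticOnNhd ℂ (fun ζ => h (line ζ)) (line ⁻¹' s) := fun hh =>
    (hh.comp hline.differentiableOn (mapsTo_preimage _ _)).analyticOnNhd
      (ho.preimage hline.continuous)
  have hconv : Convex ℝ (line ⁻¹' s) := (hs.translate_preimage_right y).linear_preimage
    ((LinearMap.toSpanSingleton ℂ E (z - y)).restrictScalars ℝ)
  have hnear : ∀ᶠ ζ in 𝓝 (0 : ℂ), f (line ζ) = g (line ζ) :=
    (hline.continuous.tendsto' 0 y (by simp [line])).eventually hfg
  have heqOn := (hanalytic hf).eqOn_of_preconnected_of_eventuallyEq (hanalytic hg)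
    hconv.isPreconnected (by simpa [line] using hy) hnear (x := 1) (by simpa [line] using hz)
  simpa [line] using heqOn

lemma eqOn_of_preconnected_of_eventuallyEq [CompleteSpace W] {f g : E → W} {U : Set E}
    (hU : IsOpen U) (hc : IsPreconnected U) (hf : DifferentiableOn ℂ f U)
    (hg : DifferentiableOn ℂ g U) {x₀ : E} (hx₀ : x₀ ∈ U) (hfg : f =ᶠ[𝓝 x₀] g) : EqOn f g U := by
  suffices hs : U ⊆ {x | f =ᶠ[𝓝 x] g} from fun x hx => (hs hx).self_of_nhds
  refine hc.subset_of_closure_inter_subset isOpen_setOfPred_eventually_nhds ⟨x₀, hx₀, hfg⟩ ?_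
  rintro x ⟨hx, hxU⟩
  obtain ⟨r, hr, hball⟩ := Metric.isOpen_iff.1 hU x hxU
  obtain ⟨y, hy, hxy⟩ := Metric.mem_closure_iff.1 hx r hr
  exact (eqOn_of_convex_of_eventuallyEq isOpen_ball (convex_ball x r) (hf.mono hball)
    (hg.mono hball) (mem_ball'.2 hxy) hy).eventuallyEq_of_mem (ball_mem_nhds x hr)

lemma eqOn_zero_of_eventually_ofReal [CompleteSpace W] {f : ℂ → W} {s : Set ℂ} (ho : IsOpen s)
    (hs : IsPreconnected s) (h0 : 0 ∈ s) (hf : DifferentiableOn ℂ f s)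
    (hreal : ∀ᶠ t : ℝ in 𝓝 0, f t = 0) : EqOn f 0 s := by
  refine (hf.analyticOnNhd ho).eqOn_zero_of_preconnected_of_frequently_eq_zero hs h0 ?_
  have htendsto : Tendsto (fun t : ℝ => (t : ℂ)) (𝓝[≠] 0) (𝓝[≠] 0) :=
    tendsto_nhdsWithin_iff.2 ⟨(continuous_ofReal.tendsto' 0 0 ofReal_zero).mono_left
      nhdsWithin_le_nhds, eventually_mem_nhdsWithin.mono fun t ht => ofReal_ne_zero.2 ht⟩
  exact htendsto.frequently (hreal.filter_mono nhdsWithin_le_nhds).frequently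

/- With `u = (z + star y) / 2` and `v = -i (z - star y) / 2`, the complex line
`ζ ↦ (u + ζ v, star u + ζ star v)` lies on the diagonal `y = star z` for real `ζ` and
passes through `(z, y)` at `ζ = i`. -/
lemma eventually_eq_zero_of_polarization [CompleteSpace W] [StarAddMonoid E] [StarModule ℂ E]
    [ContinuousStar E] {K : E × E → W} {z₀ : E}
    (hK : ∀ᶠ x in 𝓝 (z₀, star z₀), DifferentiableAt ℂ K x)
    (hdiag : ∀ᶠ z in 𝓝 z₀, K (z, star z) = 0) : ∀ᶠ x in 𝓝 (z₀, star z₀), K x = 0 := by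
  let u : E × E → E := fun x => (2 : ℂ)⁻¹ • (x.1 + star x.2)
  let v : E × E → E := fun x => (-(I / 2) : ℂ) • (x.1 - star x.2)
  let line : E × E → ℂ → E × E := fun x ζ => (u x + ζ • v x, star (u x) + ζ • star (v x))
  have hu₀ : u (z₀, star z₀) = z₀ := by
    simp only [u, star_star]
    module
  have hline : Continuous fun p : (E × E) × ℂ => line p.1 p.2 := by fun_prop
  have hline₀ : ∀ ζ, line (z₀, star z₀) ζ = (z₀, star z₀) := fun ζ => by
    simp only [line, hu₀]
    simp [v]
  have hline_I : ∀ x, line x I = x := fun x => by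
    have hI : I * -(I / 2) = 2⁻¹ := by linear_combination (-1 / 2 : ℂ) * I_mul_I
    have hI' : I * star (-(I / 2)) = -2⁻¹ := by
      simp only [star_def, map_neg, map_div₀, conj_I, conj_ofNat]
      linear_combination (1 / 2 : ℂ) * I_mul_I
    have hhalf : star (2⁻¹ : ℂ) = 2⁻¹ := by simp
    refine Prod.ext ?_ ?_ <;>
      simp only [line, u, v, star_smul, star_add, star_sub, star_star, smul_smul, hI, hI',
        hhalf] <;> module
  obtain ⟨r, hr, hdiff⟩ := Metric.eventually_nhds_iff_ball.1 hK
  have hdisc : ∀ᶠ x in 𝓝 (z₀, star z₀), ∀ ζ ∈ closedBall (0 : ℂ) 2,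
      line x ζ ∈ ball (z₀, star z₀) r :=
    (isCompact_closedBall (0 : ℂ) 2).eventually_forall_of_forall_eventually fun ζ _ =>
      (hline.tendsto' (_, ζ) _ (hline₀ ζ)).eventually (ball_mem_nhds _ hr)
  have hu : ∀ᶠ x in 𝓝 (z₀, star z₀), ∀ᶠ z in 𝓝 (u x), K (z, star z) = 0 :=
    (Continuous.tendsto' (by fun_prop) (z₀, star z₀) z₀ hu₀).eventually hdiag.eventually_nhds
  filter_upwards [hdisc, hu] with x hx hux
  have hreal : ∀ᶠ t : ℝ in 𝓝 0, K (line x t) = 0 := by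
    have hcont : Continuous fun t : ℝ => u x + (t : ℂ) • v x := by fun_prop
    filter_upwards [(hcont.tendsto' 0 (u x) (by simp)).eventually hux] with t ht
    simpa [line, star_smul] using ht
  have hzero := eqOn_zero_of_eventually_ofReal (f := fun ζ => K (line x ζ)) isOpen_ball
    (convex_ball 0 2).isPreconnected (mem_ball_self two_pos) (fun ζ hζ =>
      ((hdiff _ (hx ζ (ball_subset_closedBall hζ))).comp ζ (f := fun ζ => line x ζ)
        (by fun_prop)).differentiableWithinAt) hreal (x := I) (by simp)
  simpa only [hline_I, Pi.zero_apply] using hzero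

lemma differentiableAt_of_exp {H : E → ℂ} {z : E} (hH : ContinuousAt H z)
    (hexp : DifferentiableAt ℂ (fun y => exp (H y)) z) : DifferentiableAt ℂ H z := by
  have hnear : ∀ᶠ y in 𝓝 z, ‖H y - H z‖ < Real.pi :=
    (hH.sub continuousAt_const).norm.eventually_lt_const (by simpa using Real.pi_pos)
  have hlog : H =ᶠ[𝓝 z] fun y => H z + log (exp (H y) * exp (-H z)) := by
    filter_upwards [hnear] with y hy
    have him := abs_lt.1 ((abs_im_le_norm (H y - H z)).trans_lt hy)
    rw [← exp_add, ← sub_eq_add_neg, log_exp him.1 him.2.le, add_sub_cancel]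
  refine DifferentiableAt.congr_of_eventuallyEq ?_ hlog
  refine ((hexp.mul_const _).clog ?_).const_add _
  rw [← exp_add, add_neg_cancel, exp_zero]
  exact one_mem_slitPlane

lemma exists_differentiableOn_log {s : Set E} (ho : IsOpen s) (hc : Convex ℝ s)
    (hne : s.Nonempty) {g : E → ℂ} (hg : DifferentiableOn ℂ g s) (h0 : ∀ z ∈ s, g z ≠ 0) :
    ∃ H : E → ℂ, DifferentiableOn ℂ H s ∧ ∀ z ∈ s, exp (H z) = g z := by
  have hsc : IsSimplyConnected s := by
    have := hc.contractibleSpace hne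
    exact (inferInstance : SimplyConnectedSpace s)
  obtain ⟨H, hH, hexp⟩ := Complex.exists_continuousOn_eqOn_exp_comp hsc ho hg.continuousOn
    (by rintro ⟨z, hz, hz0⟩; exact h0 z hz hz0)
  refine ⟨H, fun z hz => (differentiableAt_of_exp (hH.continuousAt (ho.mem_nhds hz))
    ?_).differentiableWithinAt, hexp⟩
  exact (hg.differentiableAt (ho.mem_nhds hz)).congr_of_eventuallyEq
    (hexp.eventuallyEq_of_mem (ho.mem_nhds hz))

lemma tendsto_smul_zero (x : E) : Tendsto (fun t : ℂ => t • x) (𝓝 0) (𝓝 0) := by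
  have hcont : Continuous fun t : ℂ => t • x := by fun_prop
  exact hcont.tendsto' 0 0 (zero_smul ℂ x)

lemma exists_ne_zero_smul_of_eventually (x : E) {P : E → Prop} (h : ∀ᶠ y in 𝓝 0, P y) :
    ∃ ε : ℂ, ε ≠ 0 ∧ P (ε • x) := by
  obtain ⟨ε, hε, hε0⟩ := ((((tendsto_smul_zero x).eventually h).filter_mono
    (nhdsWithin_le_nhds (s := {0}ᶜ))).and self_mem_nhdsWithin).exists
  exact ⟨ε, hε0, hε⟩

lemma hasDerivAt_prodMk {f : E × ℂ → W} {x : E} {w : ℂ} (hf : DifferentiableAt ℂ f (x, w)) :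
    HasDerivAt (fun w => f (x, w)) (fderiv ℂ f (x, w) (0, 1)) w :=
  hf.hasFDerivAt.comp_hasDerivAt w ((hasDerivAt_const w x).prodMk (hasDerivAt_id w))

lemma eventually_eq_of_eventually_hasFDerivAt_zero {f : E → W} {x : E}
    (hf : ∀ᶠ y in 𝓝 x, HasFDerivAt f (0 : E →L[ℂ] W) y) : ∀ᶠ y in 𝓝 x, f y = f x := by
  obtain ⟨r, hr, hball⟩ := eventually_nhds_iff_ball.1 hf
  filter_upwards [ball_mem_nhds x hr] with y hy
  exact isOpen_ball.is_const_of_fderiv_eq_zero (𝕜 := ℂ) (convex_ball x r).isPreconnected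
    (fun z hz => (hball z hz).differentiableAt.differentiableWithinAt)
    (fun z hz => (hball z hz).fderiv) hy (mem_ball_self hr)

omit [NormedSpace ℂ E] in
lemma eventually_eq_of_eventually_hasDerivAt_snd_zero {f : E × ℂ → W}
    (hf : ∀ᶠ P in 𝓝 (0 : E × ℂ), HasDerivAt (fun w => f (P.1, w)) 0 P.2) :
    ∀ᶠ P in 𝓝 0, f P = f (P.1, 0) := by
  obtain ⟨r, hr, hball⟩ := eventually_nhds_iff_ball.1 hf
  filter_upwards [ball_mem_nhds 0 hr] with P hP
  have hP' : ‖P.1‖ < r ∧ ‖P.2‖ < r := by simpa [Prod.norm_def] using hP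
  have hderiv : ∀ w ∈ ball (0 : ℂ) r, HasDerivAt (fun w => f (P.1, w)) 0 w := fun w hw =>
    hball (P.1, w) (by simpa [Prod.norm_def, hP'.1] using hw)
  exact isOpen_ball.is_const_of_deriv_eq_zero (convex_ball 0 r).isPreconnected
    (fun w hw => (hderiv w hw).differentiableAt.differentiableWithinAt)
    (fun w hw => (hderiv w hw).deriv) (mem_ball_zero_iff.2 hP'.2) (mem_ball_self hr)

lemma eventually_eq_smul_of_additive {f : ℂ → W} {v : W} (hf : HasDerivAt f v 0)
    (hadd : ∀ᶠ x in 𝓝 (0 : ℂ × ℂ), f (x.1 + x.2) = f x.1 + f x.2) :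
    ∀ᶠ z in 𝓝 0, f z = z • v := by
  have hf0 : f 0 = 0 := by simpa using hadd.self_of_nhds
  have hderiv : ∀ᶠ z in 𝓝 (0 : ℂ), HasFDerivAt (fun z => f z - z • v) (0 : ℂ →L[ℂ] W) z := by
    filter_upwards [hadd.curry_nhds] with z hz
    have hshift : HasDerivAt (fun w => f (z + w)) v 0 :=
      (hf.const_add (f z)).congr_of_eventuallyEq hz
    have hfz : HasDerivAt f v z := by
      have hback := HasDerivAt.comp_sub_const (f := fun w => f (z + w)) z z (by rwa [sub_self])
      simpa only [add_sub_cancel] using hback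
    have hsub := hfz.fun_sub ((hasDerivAt_id' z).smul_const v)
    rw [one_smul, sub_self] at hsub
    simpa using hsub.hasFDerivAt
  filter_upwards [eventually_eq_of_eventually_hasFDerivAt_zero hderiv] with z hz
  rwa [hf0, zero_smul, sub_zero, sub_eq_zero] at hz

end SeveralVariables

section MatrixDifferentiability

variable {𝕜 E : Type*} [NontriviallyNormedField 𝕜] [NormedAddCommGroup E] [NormedSpace 𝕜 E]
  {m n l : Type*} [Fintype n] {x : E}

lemma differentiableAt_matrix_det [DecidableEq n] {M : E → Matrix n n 𝕜}
    (hM : ∀ i j, DifferentiableAt 𝕜 (fun y => M y i j) x) :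
    DifferentiableAt 𝕜 (fun y => (M y).det) x := by
  simp only [Matrix.det_apply]
  fun_prop

lemma differentiableAt_matrix_mul {M : E → Matrix m n 𝕜} {N : E → Matrix n l 𝕜}
    (hM : ∀ i j, DifferentiableAt 𝕜 (fun y => M y i j) x)
    (hN : ∀ i j, DifferentiableAt 𝕜 (fun y => N y i j) x) (i : m) (j : l) :
    DifferentiableAt 𝕜 (fun y => (M y * N y) i j) x := by
  simp only [Matrix.mul_apply]
  fun_prop

lemma differentiableAt_matrix_inv [DecidableEq n] {M : E → Matrix n n 𝕜}
    (hM : ∀ i j, DifferentiableAt 𝕜 (fun y => M y i j) x) (h0 : (M x).det ≠ 0) (i j : n) :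
    DifferentiableAt 𝕜 (fun y => (M y)⁻¹ i j) x := by
  simp only [Matrix.inv_def, Ring.inverse_eq_inv', Matrix.smul_apply, smul_eq_mul,
    Matrix.adjugate_apply]
  refine (differentiableAt_matrix_det hM).inv h0 |>.mul (differentiableAt_matrix_det fun k l => ?_)
  obtain rfl | hk := eq_or_ne k j
  · simp
  · simpa [Matrix.updateRow_ne hk] using hM k l

end MatrixDifferentiability

section Contraction

open scoped Matrix.Norms.L2Operator MatrixOrder Pointwise

variable {m n : Type*} [Fintype m] [Fintype n] [DecidableEq n]

lemma l2_opNorm_mul_conjTranspose_self [DecidableEq m] (A : Matrix m n ℂ) :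
    ‖A * Aᴴ‖ = ‖A‖ * ‖A‖ := by
  simpa [l2_opNorm_conjTranspose] using l2_opNorm_conjTranspose_mul_self Aᴴ

lemma posDef_one_sub_mul_conjTranspose_iff [DecidableEq m] (A : Matrix m n ℂ) :
    (1 - A * Aᴴ).PosDef ↔ ‖A‖ < 1 := by
  have hadj : IsSelfAdjoint (1 - A * Aᴴ) := by
    simp [IsSelfAdjoint, star_eq_conjTranspose]
  rw [← isStrictlyPositive_iff_posDef,
    StarOrderedRing.isStrictlyPositive_iff_spectrum_pos (R := ℝ) _ hadj]
  rcases isEmpty_or_nonempty m with hm | hm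
  · have hA : ‖A‖ = 0 := by rw [Subsingleton.elim A 0, norm_zero]
    simp [hA, spectrum.of_subsingleton]
  have hnorm := l2_opNorm_mul_conjTranspose_self A
  have hspec : spectrum ℝ (1 - A * Aᴴ) = {(1 : ℝ)} - spectrum ℝ (A * Aᴴ) := by
    rw [spectrum.singleton_sub_eq, map_one]
  rw [hspec]
  constructor
  · intro h
    have hmem : ‖A * Aᴴ‖ ∈ spectrum ℝ (A * Aᴴ) :=
      CStarAlgebra.norm_mem_spectrum_of_nonneg (posSemidef_self_mul_conjTranspose A).nonneg
    have hpos := h _ (Set.sub_mem_sub rfl hmem)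
    rw [hnorm] at hpos
    nlinarith
  · rintro h _ ⟨_, rfl, x, hx, rfl⟩
    have hxA : x ≤ ‖A‖ * ‖A‖ :=
      (Real.le_norm_self x).trans ((spectrum.norm_le_norm_of_mem hx).trans_eq hnorm)
    refine sub_pos.2 (hxA.trans_lt ?_)
    nlinarith [norm_nonneg A]

lemma posSemidef_one_sub_mul_conjTranspose [DecidableEq m] {A : Matrix m n ℂ} (hA : ‖A‖ ≤ 1) :
    (1 - A * Aᴴ).PosSemidef := by
  have hnonneg : 0 ≤ A * Aᴴ := (posSemidef_self_mul_conjTranspose A).nonneg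
  rw [← Matrix.le_iff, ← CStarAlgebra.norm_le_one_iff_of_nonneg _ hnonneg,
    l2_opNorm_mul_conjTranspose_self]
  exact mul_le_one₀ hA (norm_nonneg A) hA

lemma norm_lt_one_of_forall_det_ne_zero [DecidableEq m] {A : Matrix m n ℂ}
    (hA : ∀ s ∈ Icc (0 : ℝ) 1, (1 - ((s : ℂ) • A) * ((s : ℂ) • A)ᴴ).det ≠ 0) : ‖A‖ < 1 := by
  by_contra! hnorm
  have hpos : 0 < ‖A‖ := one_pos.trans_le hnorm
  have hunit : ‖((‖A‖⁻¹ : ℝ) : ℂ) • A‖ = 1 := by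
    rw [norm_smul, norm_real, norm_inv, norm_norm, inv_mul_cancel₀ hpos.ne']
  have hdef := (posSemidef_one_sub_mul_conjTranspose hunit.le).posDef_iff_det_ne_zero.2
    (hA _ ⟨inv_nonneg.2 hpos.le, inv_le_one_of_one_le₀ hnorm⟩)
  exact ((posDef_one_sub_mul_conjTranspose_iff _).1 hdef).ne hunit

lemma posDef_one_sub_conjTranspose_mul_iff (A : Matrix m n ℂ) :
    (1 - Aᴴ * A).PosDef ↔ ‖A‖ < 1 := by
  classical
  simpa [l2_opNorm_conjTranspose] using posDef_one_sub_mul_conjTranspose_iff Aᴴ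

lemma det_one_sub_mul_ne_zero [DecidableEq m] {A : Matrix m n ℂ} {B : Matrix n m ℂ} (hA : ‖A‖ < 1)
    (hB : ‖B‖ < 1) : (1 - A * B).det ≠ 0 := by
  have hAB : ‖A * B‖ < 1 :=
    (l2_opNorm_mul A B).trans_lt (mul_lt_one_of_nonneg_of_lt_one_left (norm_nonneg A) hA hB.le)
  exact ((Matrix.isUnit_iff_isUnit_det _).1 (isUnit_one_sub_of_norm_lt_one hAB)).ne_zero

lemma exists_conjTranspose_mul_self_eq_inv {M : Matrix n n ℂ} (hM : M.PosDef) :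
    ∃ R : Matrix n n ℂ, Rᴴ * R = M⁻¹ := by
  obtain ⟨R, hR⟩ := CStarAlgebra.nonneg_iff_eq_star_mul_self.1 hM.inv.posSemidef.nonneg
  exact ⟨R, hR.symm⟩

end Contraction

section PseudoUnitary

variable {m n : Type*} [Fintype m] [Fintype n] [DecidableEq m] [DecidableEq n]

lemma inv_one_sub_mul_mul_comm {R : Type*} [CommRing R] {A : Matrix m n R} {B : Matrix n m R}
    (h : IsUnit (1 - A * B).det) : (1 - A * B)⁻¹ * A = A * (1 - B * A)⁻¹ := by
  have h' : IsUnit (1 - B * A).det := by rwa [← det_one_sub_mul_comm]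
  have hcomm : A * (1 - B * A) = (1 - A * B) * A := by
    simp only [Matrix.mul_sub, Matrix.sub_mul, Matrix.mul_one, Matrix.one_mul, Matrix.mul_assoc]
  calc (1 - A * B)⁻¹ * A = (1 - A * B)⁻¹ * (A * (1 - B * A)) * (1 - B * A)⁻¹ := by
        rw [← Matrix.mul_assoc, mul_nonsing_inv_cancel_right _ _ h']
    _ = A * (1 - B * A)⁻¹ := by rw [hcomm, nonsing_inv_mul_cancel_left _ _ h]

lemma inv_one_sub_mul_eq_one_add {R : Type*} [CommRing R] {A : Matrix m n R} {B : Matrix n m R}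
    (h : IsUnit (1 - A * B).det) : (1 - A * B)⁻¹ = 1 + A * (1 - B * A)⁻¹ * B := by
  have hinv := nonsing_inv_mul _ h
  rwa [Matrix.mul_sub, Matrix.mul_one, ← Matrix.mul_assoc, inv_one_sub_mul_mul_comm h,
    sub_eq_iff_eq_add] at hinv

/-- The block matrix `G = [a, b; c, d]` preserves the Hermitian form of signature `(m, n)`, that
is, `Gᴴ J G = J` for `J = diag(1, -1)`. Such matrices act on the strict contractions of size
`m × n` by linear fractional transformations. -/
structure IsPseudoUnitary (a : Matrix m m ℂ) (b : Matrix m n ℂ) (c : Matrix n m ℂ)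
    (d : Matrix n n ℂ) : Prop where
  left_left : aᴴ * a - cᴴ * c = 1
  left_right : aᴴ * b = cᴴ * d
  right_right : dᴴ * d - bᴴ * b = 1

/-- The linear fractional transformation `Z ↦ (a Z + b) (c Z + d)⁻¹` of matrices. -/
def linFrac (a : Matrix m m ℂ) (b : Matrix m n ℂ) (c : Matrix n m ℂ) (d : Matrix n n ℂ)
    (Z : Matrix m n ℂ) : Matrix m n ℂ := (a * Z + b) * (c * Z + d)⁻¹

namespace IsPseudoUnitary

variable {a : Matrix m m ℂ} {b : Matrix m n ℂ} {c : Matrix n m ℂ} {d : Matrix n n ℂ}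

lemma right_left (h : IsPseudoUnitary a b c d) : bᴴ * a = dᴴ * c := by
  simpa using congr_arg conjTranspose h.left_right

lemma symm (h : IsPseudoUnitary a b c d) : IsPseudoUnitary aᴴ (-cᴴ) (-bᴴ) dᴴ := by
  have hmul : fromBlocks aᴴ (-cᴴ) (-bᴴ) dᴴ * fromBlocks a b c d = 1 := by
    rw [fromBlocks_multiply, ← fromBlocks_one]
    congr 1
    · simpa [sub_eq_add_neg] using h.left_left
    · simp [h.left_right]
    · simp [h.right_left]
    · simpa [sub_eq_add_neg, add_comm] using h.right_right
  rw [mul_eq_one_comm, fromBlocks_multiply, ← fromBlocks_one, fromBlocks_inj] at hmul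
  obtain ⟨haa, hac, -, hdd⟩ := hmul
  refine ⟨?_, ?_, ?_⟩
  · simpa [sub_eq_add_neg] using haa
  · simpa [add_eq_zero_iff_neg_eq] using hac
  · simpa [sub_eq_add_neg, add_comm] using hdd

lemma conjTranspose_mul_sub (h : IsPseudoUnitary a b c d) (Z : Matrix m n ℂ) :
    (c * Z + d)ᴴ * (c * Z + d) - (a * Z + b)ᴴ * (a * Z + b) = 1 - Zᴴ * Z := by
  have haa := sub_eq_iff_eq_add.1 h.left_left
  have hdd := sub_eq_iff_eq_add.1 h.right_right
  calc (c * Z + d)ᴴ * (c * Z + d) - (a * Z + b)ᴴ * (a * Z + b)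
      = Zᴴ * (cᴴ * c) * Z + Zᴴ * (cᴴ * d) + dᴴ * c * Z + dᴴ * d
        - (Zᴴ * (aᴴ * a) * Z + Zᴴ * (aᴴ * b) + bᴴ * a * Z + bᴴ * b) := by
        simp only [conjTranspose_add, conjTranspose_mul, Matrix.add_mul, Matrix.mul_add,
          Matrix.mul_assoc]
        abel
    _ = 1 - Zᴴ * Z := by
        rw [haa, hdd, h.left_right, h.right_left]
        simp only [Matrix.add_mul, Matrix.mul_add, Matrix.mul_one]
        abel

open scoped Matrix.Norms.L2Operator

lemma det_denom_ne_zero (h : IsPseudoUnitary a b c d) {Z : Matrix m n ℂ} (hZ : ‖Z‖ < 1) :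
    (c * Z + d).det ≠ 0 := by
  have hpos : ((c * Z + d)ᴴ * (c * Z + d)).PosDef := by
    rw [sub_eq_iff_eq_add.1 (h.conjTranspose_mul_sub Z)]
    exact ((posDef_one_sub_conjTranspose_mul_iff Z).2 hZ).add_posSemidef
      (posSemidef_conjTranspose_mul_self _)
  have hdet := hpos.det_pos.ne'
  rw [det_mul] at hdet
  exact right_ne_zero_of_mul hdet

lemma linFrac_mul_denom (h : IsPseudoUnitary a b c d) {Z : Matrix m n ℂ} (hZ : ‖Z‖ < 1) :
    linFrac a b c d Z * (c * Z + d) = a * Z + b :=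
  nonsing_inv_mul_cancel_right _ _ (h.det_denom_ne_zero hZ).isUnit

lemma conjTranspose_denom_mul_mul_denom (h : IsPseudoUnitary a b c d) {Z : Matrix m n ℂ}
    (hZ : ‖Z‖ < 1) :
    (c * Z + d)ᴴ * (1 - (linFrac a b c d Z)ᴴ * linFrac a b c d Z) * (c * Z + d)
      = 1 - Zᴴ * Z := by
  rw [← h.conjTranspose_mul_sub Z, ← h.linFrac_mul_denom hZ, conjTranspose_mul (linFrac a b c d Z)]
  simp only [Matrix.mul_sub, Matrix.sub_mul, Matrix.mul_one, Matrix.mul_assoc]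

lemma norm_linFrac_lt_one (h : IsPseudoUnitary a b c d) {Z : Matrix m n ℂ} (hZ : ‖Z‖ < 1) :
    ‖linFrac a b c d Z‖ < 1 := by
  have hunit : IsUnit (c * Z + d) :=
    (Matrix.isUnit_iff_isUnit_det _).2 (h.det_denom_ne_zero hZ).isUnit
  rw [← posDef_one_sub_conjTranspose_mul_iff] at hZ ⊢
  rw [← h.conjTranspose_denom_mul_mul_denom ((posDef_one_sub_conjTranspose_mul_iff Z).1 hZ)] at hZ
  exact (Matrix.IsUnit.posDef_star_left_conjugate_iff hunit).1 hZ

lemma linFrac_symm_linFrac (h : IsPseudoUnitary a b c d) {Z : Matrix m n ℂ} (hZ : ‖Z‖ < 1) :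
    linFrac aᴴ (-cᴴ) (-bᴴ) dᴴ (linFrac a b c d Z) = Z := by
  have hmul := h.linFrac_mul_denom hZ
  set W := linFrac a b c d Z
  have hdenom : (-bᴴ * W + dᴴ) * (c * Z + d) = 1 := by
    calc (-bᴴ * W + dᴴ) * (c * Z + d) = dᴴ * (c * Z + d) - bᴴ * (W * (c * Z + d)) := by
          rw [Matrix.add_mul, Matrix.neg_mul, Matrix.neg_mul, Matrix.mul_assoc]
          abel
      _ = dᴴ * c * Z - bᴴ * a * Z + (dᴴ * d - bᴴ * b) := by
          simp only [hmul, Matrix.mul_add, Matrix.mul_assoc]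
          abel
      _ = 1 := by rw [h.right_right, h.right_left, sub_self, zero_add]
  have hnum : (aᴴ * W + -cᴴ) * (c * Z + d) = Z := by
    calc (aᴴ * W + -cᴴ) * (c * Z + d) = aᴴ * (W * (c * Z + d)) - cᴴ * (c * Z + d) := by
          rw [Matrix.add_mul, Matrix.neg_mul, Matrix.mul_assoc, sub_eq_add_neg]
      _ = (aᴴ * a - cᴴ * c) * Z + (aᴴ * b - cᴴ * d) := by
          simp only [hmul, Matrix.mul_add, Matrix.sub_mul, Matrix.mul_assoc]
          abel
      _ = Z := by rw [h.left_left, h.left_right, sub_self, add_zero, Matrix.one_mul]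
  rw [linFrac, inv_eq_right_inv hdenom, hnum]

end IsPseudoUnitary

open scoped Matrix.Norms.L2Operator in
lemma exists_isPseudoUnitary_of_norm_lt_one {A : Matrix m n ℂ} (hA : ‖A‖ < 1) :
    ∃ (R : Matrix m m ℂ) (S : Matrix n n ℂ),
      IsPseudoUnitary R (-(R * A)) (-(S * Aᴴ)) S ∧ S.det ≠ 0 := by
  have hpos := (posDef_one_sub_mul_conjTranspose_iff A).2 hA
  have hpos' := (posDef_one_sub_conjTranspose_mul_iff A).2 hA
  have hdet := (Matrix.isUnit_iff_isUnit_det _).1 hpos.isUnit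
  have hdet' := (Matrix.isUnit_iff_isUnit_det _).1 hpos'.isUnit
  obtain ⟨R, hR⟩ := exists_conjTranspose_mul_self_eq_inv hpos
  obtain ⟨S, hS⟩ := exists_conjTranspose_mul_self_eq_inv hpos'
  refine ⟨R, S, ⟨?_, ?_, ?_⟩, fun hS0 => ?_⟩
  · calc Rᴴ * R - (-(S * Aᴴ))ᴴ * -(S * Aᴴ) = Rᴴ * R - A * (Sᴴ * S) * Aᴴ := by
          simp [Matrix.mul_assoc]
      _ = 1 := by rw [hR, hS, inv_one_sub_mul_eq_one_add hdet, add_sub_cancel_right]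
  · calc Rᴴ * -(R * A) = -(Rᴴ * R * A) := by simp [Matrix.mul_assoc]
      _ = (-(S * Aᴴ))ᴴ * S := by
          rw [hR, inv_one_sub_mul_mul_comm hdet, ← hS]
          simp [Matrix.mul_assoc]
  · calc Sᴴ * S - (-(R * A))ᴴ * -(R * A) = Sᴴ * S - Aᴴ * (Rᴴ * R) * A := by
          simp [Matrix.mul_assoc]
      _ = 1 := by rw [hS, hR, inv_one_sub_mul_eq_one_add hdet', add_sub_cancel_right]
  · have h0 := congr_arg Matrix.det hS
    rw [det_mul, hS0, mul_zero] at h0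
    exact (isUnit_nonsing_inv_det _ hdet').ne_zero h0.symm

end PseudoUnitary

/-- The space of `p × q` complex matrices, as a type of functions so that it carries the
normed space structure used in the statement of the theorem. -/
abbrev CMat (p q : ℕ) := Fin p → Fin q → ℂ

section TypeI

variable {p q : ℕ}

lemma transpose_of_star (Z : CMat p q) : (Matrix.of (star Z))ᵀ = (Matrix.of Z)ᴴ := rfl

section Domain

open scoped Matrix.Norms.L2Operator

lemma mem_typeIDomain_iff {Z : CMat p q} : Z ∈ typeIDomain p q ↔ ‖Matrix.of Z‖ < 1 :=
  posDef_one_sub_mul_conjTranspose_iff (Matrix.of Z)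

lemma typeIDomain_eq_preimage_ball :
    typeIDomain p q = Matrix.of ⁻¹' ball (0 : Matrix (Fin p) (Fin q) ℂ) 1 := by
  ext Z
  rw [mem_typeIDomain_iff, mem_preimage, mem_ball_zero_iff]

lemma isOpen_typeIDomain : IsOpen (typeIDomain p q) := by
  rw [typeIDomain_eq_preimage_ball]
  have hof : Continuous fun Z : CMat p q => Matrix.of Z := continuous_id
  exact isOpen_ball.preimage hof

lemma convex_typeIDomain : Convex ℝ (typeIDomain p q) := by
  rw [typeIDomain_eq_preimage_ball]
  exact (convex_ball (0 : Matrix (Fin p) (Fin q) ℂ) 1).linear_preimage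
    (Matrix.ofLinearEquiv ℝ).toLinearMap

lemma zero_mem_typeIDomain : (0 : CMat p q) ∈ typeIDomain p q := by
  simp [mem_typeIDomain_iff]

end Domain

/-- The polarized generic norm `det (I - Z Yᵀ)`, which is holomorphic in both variables and equals
`N(Z)` at `Y = star Z`, the entrywise conjugate of `Z`. -/
def polNorm (Z Y : CMat p q) : ℂ := (1 - Matrix.of Z * (Matrix.of Y)ᵀ).det

lemma polNorm_star_self (Z : CMat p q) : polNorm Z (star Z) = genNormI Z := by
  rw [polNorm, transpose_of_star, genNormI]
  symm
  rw [← conj_eq_iff_re, starRingEnd_apply, ← det_conjTranspose]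
  simp [conjTranspose_sub, conjTranspose_mul]

lemma genNormI_pos {Z : CMat p q} (hZ : Z ∈ typeIDomain p q) : 0 < genNormI Z :=
  (Complex.pos_iff.1 (Matrix.PosDef.det_pos hZ)).1

lemma genNormI_zero : genNormI (0 : CMat p q) = 1 := by simp [genNormI]

open scoped Matrix.Norms.L2Operator in
lemma polNorm_star_ne_zero {Z Y : CMat p q} (hZ : Z ∈ typeIDomain p q)
    (hY : Y ∈ typeIDomain p q) : polNorm Z (star Y) ≠ 0 := by
  rw [mem_typeIDomain_iff] at hZ hY
  exact det_one_sub_mul_ne_zero hZ (by rwa [transpose_of_star, l2_opNorm_conjTranspose])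

lemma polNorm_zero_left (Y : CMat p q) : polNorm 0 Y = 1 := by simp [polNorm]

lemma polNorm_comm (Z Y : CMat p q) : polNorm Z Y = polNorm Y Z := by
  rw [polNorm, ← det_transpose, polNorm]
  simp [transpose_sub, transpose_mul]

lemma polNorm_smul_left (t : ℂ) (Z Y : CMat p q) : polNorm (t • Z) Y = polNorm Z (t • Y) := by
  rw [polNorm, polNorm, ← smul_of, ← smul_of, transpose_smul, Matrix.smul_mul, Matrix.mul_smul]

lemma differentiable_polNorm :
    Differentiable ℂ fun P : CMat p q × CMat p q => polNorm P.1 P.2 := by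
  intro P
  refine differentiableAt_matrix_det fun i j => ?_
  simp only [Matrix.sub_apply, Matrix.mul_apply, Matrix.of_apply, Matrix.transpose_apply]
  fun_prop

lemma differentiable_polNorm_left (Y : CMat p q) : Differentiable ℂ fun Z => polNorm Z Y :=
  differentiable_polNorm.comp (f := fun Z => (Z, Y)) (by fun_prop)

lemma ofReal_genNormI_eq_det (Z : CMat p q) :
    (genNormI Z : ℂ) = (1 - (Matrix.of Z)ᴴ * Matrix.of Z).det := by
  rw [← polNorm_star_self, polNorm, transpose_of_star, det_one_sub_mul_comm]

end TypeI

section PseudoUnitaryAction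

variable {p q : ℕ} {a : Matrix (Fin p) (Fin p) ℂ} {b : Matrix (Fin p) (Fin q) ℂ}
  {c : Matrix (Fin q) (Fin p) ℂ} {d : Matrix (Fin q) (Fin q) ℂ}

lemma IsPseudoUnitary.mapsTo_typeIDomain (h : IsPseudoUnitary a b c d) :
    MapsTo (fun Z : CMat p q => Matrix.of.symm (linFrac a b c d (Matrix.of Z)))
      (typeIDomain p q) (typeIDomain p q) := fun _ hZ =>
  mem_typeIDomain_iff.2 (h.norm_linFrac_lt_one (mem_typeIDomain_iff.1 hZ))

lemma IsPseudoUnitary.differentiableOn_typeIDomain (h : IsPseudoUnitary a b c d) :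
    DifferentiableOn ℂ (fun Z : CMat p q => Matrix.of.symm (linFrac a b c d (Matrix.of Z)))
      (typeIDomain p q) := by
  refine fun Z hZ => DifferentiableAt.differentiableWithinAt
    (differentiableAt_pi.2 fun i => differentiableAt_pi.2 fun j => ?_)
  have hentry : ∀ i j, DifferentiableAt ℂ (fun Z : CMat p q => Matrix.of Z i j) Z := fun i j => by
    simp only [Matrix.of_apply]
    fun_prop
  have hleft {r : ℕ} (M : Matrix (Fin r) (Fin p) ℂ) (N : Matrix (Fin r) (Fin q) ℂ) (i j) :
      DifferentiableAt ℂ (fun Z : CMat p q => (M * Matrix.of Z + N) i j) Z :=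
    (differentiableAt_matrix_mul (M := fun _ => M) (fun _ _ => differentiableAt_const _) hentry
      i j).add_const _
  exact differentiableAt_matrix_mul (hleft a b)
    (differentiableAt_matrix_inv (hleft c d) (h.det_denom_ne_zero (mem_typeIDomain_iff.1 hZ))) i j

lemma IsPseudoUnitary.biholo (h : IsPseudoUnitary a b c d) :
    Biholo (fun Z : CMat p q => Matrix.of.symm (linFrac a b c d (Matrix.of Z)))
      (typeIDomain p q) (typeIDomain p q) := by
  refine ⟨h.differentiableOn_typeIDomain, h.mapsTo_typeIDomain, _,
    h.symm.differentiableOn_typeIDomain, h.symm.mapsTo_typeIDomain,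
    fun Z hZ => h.linFrac_symm_linFrac (mem_typeIDomain_iff.1 hZ), fun Z hZ => ?_⟩
  simpa using congr_arg Matrix.of.symm <| h.symm.linFrac_symm_linFrac (mem_typeIDomain_iff.1 hZ)

lemma IsPseudoUnitary.normSq_det_mul_genNormI (h : IsPseudoUnitary a b c d) {Z : CMat p q}
    (hZ : Z ∈ typeIDomain p q) :
    normSq (c * Matrix.of Z + d).det * genNormI (Matrix.of.symm (linFrac a b c d (Matrix.of Z)))
      = genNormI Z := by
  have hdet := congr_arg Matrix.det
    (h.conjTranspose_denom_mul_mul_denom (mem_typeIDomain_iff.1 hZ))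
  rw [det_mul, det_mul, det_conjTranspose, ← ofReal_genNormI_eq_det] at hdet
  apply ofReal_injective
  rw [← hdet, ofReal_mul, ofReal_genNormI_eq_det, ← mul_conj, Equiv.apply_symm_apply, star_def]
  ring

lemma exists_biholo_apply_eq_zero {A : CMat p q} (hA : A ∈ typeIDomain p q) :
    ∃ ψ, Biholo ψ (typeIDomain p q) (typeIDomain p q) ∧ ψ A = 0 ∧ ∃ k : ℝ, 0 < k ∧
      ∀ Z ∈ typeIDomain p q, k * normSq (polNorm Z (star A)) * genNormI (ψ Z) = genNormI Z := by
  obtain ⟨R, S, h, hS⟩ := exists_isPseudoUnitary_of_norm_lt_one (mem_typeIDomain_iff.1 hA)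
  refine ⟨_, h.biholo, ?_, normSq S.det, normSq_pos.2 hS, fun Z hZ => ?_⟩
  · simp [linFrac]
  · have hdenom : -(S * (Matrix.of A)ᴴ) * Matrix.of Z + S
        = S * (1 - (Matrix.of A)ᴴ * Matrix.of Z) := by
      rw [Matrix.mul_sub, Matrix.mul_one, Matrix.neg_mul, Matrix.mul_assoc]
      abel
    rw [← h.normSq_det_mul_genNormI hZ, hdenom, det_mul, normSq_mul, polNorm, transpose_of_star,
      det_one_sub_mul_comm]

end PseudoUnitaryAction

section FibredAutomorphisms

variable {p q : ℕ}

/-- The hypersurface `2 Re ω = log N(Z)`, the image of the circle bundle `|ξ|² = N(Z)` under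
`ω = log ξ`. -/
def logBundle (p q : ℕ) : Set (CMat p q × ℂ) :=
  {P | P.1 ∈ typeIDomain p q ∧ 2 * P.2.re = Real.log (genNormI P.1)}

/-- The map `(Z, ω) ↦ (ψ Z, ω + H Z)` is an automorphism of the hypersurface `2 Re ω = log N(Z)`
that is fibred over the biholomorphism `ψ` of the type I domain. -/
def IsFibAut (ψ : CMat p q → CMat p q) (H : CMat p q → ℂ) : Prop :=
  Biholo ψ (typeIDomain p q) (typeIDomain p q) ∧ DifferentiableOn ℂ H (typeIDomain p q) ∧
    ∀ Z ∈ typeIDomain p q, Real.log (genNormI (ψ Z)) = 2 * (H Z).re + Real.log (genNormI Z)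

lemma IsFibAut.comp {ψ₁ ψ₂ : CMat p q → CMat p q} {H₁ H₂ : CMat p q → ℂ} (h₂ : IsFibAut ψ₂ H₂)
    (h₁ : IsFibAut ψ₁ H₁) : IsFibAut (ψ₂ ∘ ψ₁) (fun Z => H₁ Z + H₂ (ψ₁ Z)) := by
  obtain ⟨⟨hψ₁, hm₁, φ₁, hφ₁, hn₁, hl₁, hr₁⟩, hH₁, hN₁⟩ := h₁
  obtain ⟨⟨hψ₂, hm₂, φ₂, hφ₂, hn₂, hl₂, hr₂⟩, hH₂, hN₂⟩ := h₂
  refine ⟨⟨hψ₂.comp hψ₁ hm₁, hm₂.comp hm₁, φ₁ ∘ φ₂, hφ₁.comp hφ₂ hn₂, hn₁.comp hn₂,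
    hl₁.comp hl₂ hm₁, hr₁.comp hr₂ hn₂⟩, hH₁.add (hH₂.comp hψ₁ hm₁), fun Z hZ => ?_⟩
  rw [Function.comp_apply, hN₂ _ (hm₁ hZ), hN₁ _ hZ, add_re]
  ring

lemma IsFibAut.exists_symm {ψ : CMat p q → CMat p q} {H : CMat p q → ℂ} (h : IsFibAut ψ H) :
    ∃ ψ' H', IsFibAut (p := p) (q := q) ψ' H' ∧
      (∀ Z ∈ typeIDomain p q, ψ' (ψ Z) = Z ∧ H Z + H' (ψ Z) = 0) ∧
      (∀ Z ∈ typeIDomain p q, ψ (ψ' Z) = Z ∧ H' Z + H (ψ' Z) = 0) := by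
  obtain ⟨⟨hψ, hm, φ, hφ, hn, hl, hr⟩, hH, hN⟩ := h
  refine ⟨φ, fun Z => -H (φ Z), ⟨⟨hφ, hn, ψ, hψ, hm, hr, hl⟩, (hH.comp hφ hn).neg,
    fun Z hZ => ?_⟩, fun Z hZ => ⟨hl hZ, ?_⟩, fun Z hZ => ⟨hr hZ, neg_add_cancel _⟩⟩
  · have hNφ := hN _ (hn hZ)
    rw [hr hZ] at hNφ
    rw [neg_re]
    linarith
  · simp only [hl hZ, add_neg_cancel]

lemma exists_isFibAut_apply_eq_zero {P : CMat p q × ℂ} (hP : P ∈ logBundle p q) :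
    ∃ ψ H, IsFibAut (p := p) (q := q) ψ H ∧ ψ P.1 = 0 ∧ P.2 + H P.1 = 0 ∧
      ∃ c : ℂ, ∀ Z ∈ typeIDomain p q, exp (H Z) * polNorm Z (star P.1) = c := by
  obtain ⟨hA, hω⟩ := hP
  obtain ⟨L, hL, hexp⟩ := exists_differentiableOn_log isOpen_typeIDomain convex_typeIDomain
    ⟨0, zero_mem_typeIDomain⟩ (differentiable_polNorm_left (star P.1)).differentiableOn
    fun Z hZ => polNorm_star_ne_zero hZ hA
  obtain ⟨ψ, hψ, hψA, k, hk, hnorm⟩ := exists_biholo_apply_eq_zero hA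
  have hlog : ∀ Z ∈ typeIDomain p q, Real.log (genNormI (ψ Z)) =
      -2 * (L Z).re - Real.log k + Real.log (genNormI Z) := fun Z hZ => by
    have h0 : normSq (polNorm Z (star P.1)) ≠ 0 :=
      (normSq_pos.2 (polNorm_star_ne_zero hZ hA)).ne'
    rw [← hnorm Z hZ, Real.log_mul (mul_ne_zero hk.ne' h0) (genNormI_pos (hψ.2.1 hZ)).ne',
      Real.log_mul hk.ne' h0, ← hexp Z hZ, normSq_eq_norm_sq, Real.log_pow, norm_exp,
      Real.log_exp]
    push_cast
    ring
  have hlogA := hlog P.1 hA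
  rw [hψA, genNormI_zero, Real.log_one] at hlogA
  refine ⟨ψ, fun Z => L P.1 - L Z - P.2, ⟨hψ, (hL.const_sub _).sub_const _, fun Z hZ => ?_⟩, hψA,
    by ring, exp (L P.1 - P.2), fun Z hZ => ?_⟩
  · rw [hlog Z hZ, sub_re, sub_re]
    linarith
  · rw [← hexp Z hZ, ← exp_add]
    congr 1
    ring

end FibredAutomorphisms

section Polarized

variable {p q : ℕ}

/-- The complex bilinear pairing `tr (X Yᵀ)` on matrices. -/
def traceForm : CMat p q →L[ℂ] CMat p q →L[ℂ] ℂ :=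
  ∑ i, ∑ j, (ContinuousLinearMap.mul ℂ ℂ).bilinearComp
    ((ContinuousLinearMap.proj (R := ℂ) (φ := fun _ : Fin q => ℂ) j).comp
      (ContinuousLinearMap.proj (R := ℂ) (φ := fun _ : Fin p => Fin q → ℂ) i))
    ((ContinuousLinearMap.proj (R := ℂ) (φ := fun _ : Fin q => ℂ) j).comp
      (ContinuousLinearMap.proj (R := ℂ) (φ := fun _ : Fin p => Fin q → ℂ) i))

lemma traceForm_apply (X Y : CMat p q) : traceForm X Y = ∑ i, ∑ j, X i j * Y i j := by
  simp [traceForm]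

lemma traceForm_comm (X Y : CMat p q) : traceForm X Y = traceForm Y X := by
  simp only [traceForm_apply, mul_comm]

lemma traceForm_single_left (i : Fin p) (j : Fin q) (c : ℂ) (Y : CMat p q) :
    traceForm (Pi.single i (Pi.single j c)) Y = c * Y i j := by
  rw [traceForm_apply, Finset.sum_eq_single_of_mem i (Finset.mem_univ i),
    Finset.sum_eq_single_of_mem j (Finset.mem_univ j)]
  · simp
  · intro k _ hk
    simp [Pi.single_eq_of_ne hk]
  · intro k _ hk
    simp [Pi.single_eq_of_ne hk]

lemma eq_zero_of_forall_traceForm_eq_zero {Y : CMat p q} (h : ∀ X, traceForm X Y = 0) :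
    Y = 0 := by
  ext i j
  simpa [traceForm_single_left] using h (Pi.single i (Pi.single j 1))

lemma traceForm_star_self_eq_zero {X : CMat p q} (h : traceForm X (star X) = 0) : X = 0 := by
  have hsum : traceForm X (star X) = ((∑ i, ∑ j, ‖X i j‖ ^ 2 : ℝ) : ℂ) := by
    simp [traceForm_apply, mul_conj']
  rw [hsum, ofReal_eq_zero, Finset.sum_eq_zero_iff_of_nonneg fun i _ => by positivity] at h
  ext i j
  have hi := h i (Finset.mem_univ i)
  rw [Finset.sum_eq_zero_iff_of_nonneg fun i _ => by positivity] at hi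
  simpa using hi j (Finset.mem_univ j)

lemma exists_polNorm_smul_eq (X Y : CMat p q) :
    ∃ P : Polynomial ℂ, ∀ t : ℂ,
      polNorm (t • X) Y = 1 - t * traceForm X Y + t ^ 2 * P.eval t := by
  set M := Matrix.of X * (Matrix.of Y)ᵀ with hM
  have htrace : M.trace = traceForm X Y := by
    simp [traceForm_apply, hM, Matrix.trace, Matrix.mul_apply]
  refine ⟨(det (1 + (Polynomial.X : Polynomial ℂ) • M.map Polynomial.C)).divX.divX.comp
    (-Polynomial.X), fun t => ?_⟩
  rw [polNorm, ← smul_of, Matrix.smul_mul, sub_eq_add_neg, ← neg_smul, Matrix.det_one_add_smul,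
    htrace]
  simp only [Polynomial.eval_comp, Polynomial.eval_neg, Polynomial.eval_X]
  ring

lemma hasDerivAt_polNorm_smul (X Y : CMat p q) :
    HasDerivAt (fun t : ℂ => polNorm (t • X) Y) (-traceForm X Y) 0 := by
  obtain ⟨P, hP⟩ := exists_polNorm_smul_eq X Y
  simp only [hP]
  have hlinear := ((hasDerivAt_id (0 : ℂ)).mul_const (traceForm X Y)).const_sub 1
  exact (hlinear.add ((hasDerivAt_pow 2 0).mul (P.hasDerivAt 0))).congr_deriv (by simp)

lemma hasFDerivAt_polNorm_left (Y : CMat p q) :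
    HasFDerivAt (fun Z => polNorm Z Y) (-(traceForm.flip Y)) 0 := by
  have hF := (differentiable_polNorm_left Y 0).hasFDerivAt
  suffices -(traceForm.flip Y) = fderiv ℂ (fun Z => polNorm Z Y) 0 by rwa [this]
  ext1 X
  have hline : HasDerivAt (fun t : ℂ => t • X) X 0 := by
    simpa using (hasDerivAt_id (0 : ℂ)).smul_const X
  simpa using (hasDerivAt_polNorm_smul X Y).unique
    (hF.comp_hasDerivAt_of_eq (0 : ℂ) hline (by simp))

/-- The logarithm of the polarized generic norm, in the principal branch; it is holomorphic only
near `(0, 0)`, where the polarized generic norm is close to `1`. -/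
def polLog (Z Y : CMat p q) : ℂ := Complex.log (polNorm Z Y)

lemma polLog_comm (Z Y : CMat p q) : polLog Z Y = polLog Y Z := by
  rw [polLog, polNorm_comm, polLog]

@[simp] lemma polLog_zero_left (Y : CMat p q) : polLog 0 Y = 0 := by
  rw [polLog, polNorm_zero_left, log_one]

@[simp] lemma polLog_zero_right (Y : CMat p q) : polLog Y 0 = 0 := by
  rw [polLog_comm, polLog_zero_left]

lemma polLog_star_self {Z : CMat p q} (hZ : Z ∈ typeIDomain p q) :
    polLog Z (star Z) = (Real.log (genNormI Z) : ℂ) := by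
  rw [polLog, polNorm_star_self, ofReal_log (genNormI_pos hZ).le]

lemma eventually_polNorm_mem_slitPlane :
    ∀ᶠ x in 𝓝 (0 : CMat p q × CMat p q), polNorm x.1 x.2 ∈ slitPlane := by
  have hcont := (differentiable_polNorm (p := p) (q := q)).continuous.tendsto' 0 1
    (polNorm_zero_left 0)
  exact hcont.eventually (isOpen_slitPlane.mem_nhds one_mem_slitPlane)

lemma eventually_differentiableAt_polLog :
    ∀ᶠ x in 𝓝 (0 : CMat p q × CMat p q),
      DifferentiableAt ℂ (fun x : CMat p q × CMat p q => polLog x.1 x.2) x :=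
  eventually_polNorm_mem_slitPlane.mono fun x hx => (differentiable_polNorm x).clog hx

/-- A parametrization of the points `(Z, ω, Y)` by `((Z, s), (Y, t))`, chosen such that the real
points `Y = star Z`, `t = star s` are mapped to the hypersurface `2 Re ω = log N(Z)`. -/
def polChart (x : (CMat p q × ℂ) × (CMat p q × ℂ)) : CMat p q × ℂ × CMat p q :=
  (x.1.1, 2⁻¹ * polLog x.1.1 x.2.1 + 2⁻¹ * (x.1.2 - x.2.2), x.2.1)

lemma eventually_differentiableAt_polChart :
    ∀ᶠ x in 𝓝 0, DifferentiableAt ℂ (polChart (p := p) (q := q)) x := by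
  have hproj : Continuous fun x : (CMat p q × ℂ) × (CMat p q × ℂ) => (x.1.1, x.2.1) := by fun_prop
  filter_upwards [(hproj.tendsto' 0 0 rfl).eventually eventually_differentiableAt_polLog] with x hx
  have hlog : DifferentiableAt ℂ
      (fun x : (CMat p q × ℂ) × (CMat p q × ℂ) => polLog x.1.1 x.2.1) x :=
    hx.comp x (f := fun x => (x.1.1, x.2.1)) (by fun_prop)
  unfold polChart
  fun_prop

lemma polChart_zero : polChart (0 : (CMat p q × ℂ) × (CMat p q × ℂ)) = 0 := by simp [polChart]

lemma tendsto_polChart : Tendsto (polChart (p := p) (q := q)) (𝓝 0) (𝓝 0) := by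
  simpa only [ContinuousAt, polChart_zero] using
    (eventually_differentiableAt_polChart (p := p) (q := q)).self_of_nhds.continuousAt

lemma polChart_star_mem_logBundle {x : CMat p q × ℂ} (hx : x.1 ∈ typeIDomain p q) :
    ((polChart (x, star x)).1, (polChart (x, star x)).2.1) ∈ logBundle p q := by
  refine ⟨hx, ?_⟩
  simp [polChart, polLog_star_self hx]

lemma eventually_eq_zero_of_polChart {W : Type*} [Zero W] {K : CMat p q × ℂ × CMat p q → W}
    (hK : ∀ᶠ x in 𝓝 0, K (polChart x) = 0) : ∀ᶠ x in 𝓝 0, K x = 0 := by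
  let param : CMat p q × ℂ × CMat p q → (CMat p q × ℂ) × (CMat p q × ℂ) := fun x =>
    ((x.1, x.2.1 - 2⁻¹ * polLog x.1 x.2.2), (x.2.2, -(x.2.1 - 2⁻¹ * polLog x.1 x.2.2)))
  have hlog : ContinuousAt (fun x : CMat p q × ℂ × CMat p q => polLog x.1 x.2.2) 0 :=
    (eventually_differentiableAt_polLog (p := p) (q := q)).self_of_nhds.continuousAt.comp
      (f := fun x : CMat p q × ℂ × CMat p q => (x.1, x.2.2)) (x := 0) (by fun_prop)
  have hparam : ContinuousAt param 0 := by fun_prop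
  have hparam0 : param 0 = 0 := by simp [param]
  rw [ContinuousAt, hparam0] at hparam
  filter_upwards [hparam.eventually hK] with x hx
  have hinv : polChart (param x) = x := by
    refine Prod.ext rfl (Prod.ext ?_ rfl)
    simp only [polChart, param]
    ring
  rwa [hinv] at hx

lemma eventually_eq_zero_of_logBundle {W : Type*} [NormedAddCommGroup W] [NormedSpace ℂ W]
    [CompleteSpace W] {K : CMat p q × ℂ × CMat p q → W}
    (hK : ∀ᶠ x in 𝓝 0, DifferentiableAt ℂ K x)
    (h : ∀ᶠ P in 𝓝 (0 : CMat p q × ℂ), P ∈ logBundle p q → K (P.1, P.2, star P.1) = 0) :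
    ∀ᶠ x in 𝓝 0, K x = 0 := by
  refine eventually_eq_zero_of_polChart ?_
  have hbase : ((0 : CMat p q × ℂ), star (0 : CMat p q × ℂ)) = 0 := by simp
  rw [← hbase]
  refine eventually_eq_zero_of_polarization (K := fun x => K (polChart x)) ?_ ?_
  · rw [hbase]
    filter_upwards [tendsto_polChart.eventually hK, eventually_differentiableAt_polChart]
      with x hKx hx using hKx.comp x hx
  · have hdiag : Tendsto (fun x : CMat p q × ℂ => (x, star x)) (𝓝 0) (𝓝 0) :=
      Continuous.tendsto' (by fun_prop) _ _ hbase
    have hproj : Continuous fun x : CMat p q × ℂ × CMat p q => (x.1, x.2.1) := by fun_prop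
    have hdomain : ∀ᶠ x in 𝓝 (0 : CMat p q × ℂ), x.1 ∈ typeIDomain p q :=
      continuousAt_fst.eventually (isOpen_typeIDomain.mem_nhds zero_mem_typeIDomain)
    filter_upwards [(((hproj.tendsto' 0 0 rfl).comp tendsto_polChart).comp hdiag).eventually h,
      hdomain] with x hx hx1
    exact hx (polChart_star_mem_logBundle hx1)

end Polarized

section PolarizedPairs

variable {p q : ℕ}

lemma tendsto_polLog {α : Type*} {l : Filter α} {f g : α → CMat p q}
    (hf : Tendsto f l (𝓝 0)) (hg : Tendsto g l (𝓝 0)) :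
    Tendsto (fun a => polLog (f a) (g a)) l (𝓝 0) := by
  have hlim : Tendsto (fun x : CMat p q × CMat p q => polLog x.1 x.2) (𝓝 0)
      (𝓝 (polLog (0 : CMat p q) (0 : CMat p q))) :=
    (eventually_differentiableAt_polLog (p := p) (q := q)).self_of_nhds.continuousAt
  rw [polLog_zero_left] at hlim
  have hpair : Tendsto (fun a => (f a, g a)) l (𝓝 (0 : CMat p q × CMat p q)) :=
    hf.prodMk_nhds hg
  have hcomp := Tendsto.comp (g := fun x : CMat p q × CMat p q => polLog x.1 x.2) hlim hpair
  exact hcomp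

lemma hasFDerivAt_polLog_left (Y : CMat p q) :
    HasFDerivAt (fun Z => polLog Z Y) (-(traceForm.flip Y)) 0 := by
  have h := (hasFDerivAt_polNorm_left Y).clog (by rw [polNorm_zero_left]; exact one_mem_slitPlane)
  rwa [polNorm_zero_left, inv_one, one_smul] at h

/-- The second component of the point `((Z, ω), (Y, τ))` of the complexified hypersurface
`ω + τ = polLog Z Y`, in the coordinates `(Z, ω, Y)`. On the hypersurface itself, where
`Y = star Z`, it is the conjugate of `(Z, ω)`. -/
def polConj (x : CMat p q × ℂ × CMat p q) : CMat p q × ℂ :=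
  (x.2.2, polLog x.1 x.2.2 - x.2.1)

lemma eventually_differentiableAt_polConj :
    ∀ᶠ x in 𝓝 0, DifferentiableAt ℂ (polConj (p := p) (q := q)) x := by
  have hproj : Continuous fun x : CMat p q × ℂ × CMat p q => (x.1, x.2.2) := by fun_prop
  filter_upwards [(hproj.tendsto' 0 0 rfl).eventually eventually_differentiableAt_polLog] with x hx
  have hlog : DifferentiableAt ℂ (fun x : CMat p q × ℂ × CMat p q => polLog x.1 x.2.2) x :=
    hx.comp x (f := fun x => (x.1, x.2.2)) (by fun_prop)
  unfold polConj
  fun_prop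

lemma tendsto_polConj : Tendsto (polConj (p := p) (q := q)) (𝓝 0) (𝓝 0) := by
  have h0 : polConj (0 : CMat p q × ℂ × CMat p q) = 0 := by simp [polConj]
  simpa only [ContinuousAt, h0] using
    (eventually_differentiableAt_polConj (p := p) (q := q)).self_of_nhds.continuousAt

lemma polConj_star {P : CMat p q × ℂ} (hP : P ∈ logBundle p q) :
    polConj (P.1, P.2, star P.1) = star P := by
  refine Prod.ext rfl ?_
  rw [polConj, polLog_star_self hP.1, ← hP.2, ← add_conj, add_sub_cancel_left]
  rfl

/-- Two germs of holomorphic maps fixing the origin that together preserve the complexification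
of the hypersurface `2 Re ω = log N(Z)`. -/
structure IsPolPair (F F' : CMat p q × ℂ → CMat p q × ℂ) : Prop where
  diff : ∀ᶠ x in 𝓝 0, DifferentiableAt ℂ F x
  diff' : ∀ᶠ x in 𝓝 0, DifferentiableAt ℂ F' x
  map_zero : F 0 = 0
  map_zero' : F' 0 = 0
  eq : ∀ᶠ x in 𝓝 (0 : CMat p q × ℂ × CMat p q),
    (F (x.1, x.2.1)).2 + (F' (polConj x)).2 = polLog (F (x.1, x.2.1)).1 (F' (polConj x)).1

/-- The conjugate of a map by entrywise complex conjugation. -/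
def starMap (F : CMat p q × ℂ → CMat p q × ℂ) : CMat p q × ℂ → CMat p q × ℂ :=
  fun x => star (F (star x))

/-- The derivative at the origin of the base component in the base directions. -/
def linPart (F : CMat p q × ℂ → CMat p q × ℂ) : CMat p q →L[ℂ] CMat p q :=
  (ContinuousLinearMap.fst ℂ (CMat p q) ℂ).comp
    ((fderiv ℂ F 0).comp (ContinuousLinearMap.inl ℂ (CMat p q) ℂ))

/-- The derivative at the origin of the base component in the fibre direction. -/
def vertPart (F : CMat p q × ℂ → CMat p q × ℂ) : CMat p q := (fderiv ℂ F 0 (0, 1)).1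

/-- The derivative at the origin of the fibre component in the fibre direction. -/
def scalPart (F : CMat p q × ℂ → CMat p q × ℂ) : ℂ := (fderiv ℂ F 0 (0, 1)).2

lemma linPart_apply (F : CMat p q × ℂ → CMat p q × ℂ) (X : CMat p q) :
    linPart F X = (fderiv ℂ F 0 (X, 0)).1 := rfl

lemma tendsto_star_zero : Tendsto (star : CMat p q × ℂ → CMat p q × ℂ) (𝓝 0) (𝓝 0) :=
  continuous_star.tendsto' 0 0 (star_zero _)

lemma eventually_differentiableAt_starMap {F : CMat p q × ℂ → CMat p q × ℂ}
    (hF : ∀ᶠ x in 𝓝 0, DifferentiableAt ℂ F x) :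
    ∀ᶠ x in 𝓝 0, DifferentiableAt ℂ (starMap F) x := by
  filter_upwards [tendsto_star_zero.eventually hF] with x hx
  have hstar := hx.star_star
  rwa [star_star] at hstar

lemma polLog_starMap_star {F : CMat p q × ℂ → CMat p q × ℂ} {P : CMat p q × ℂ}
    (hP : F P ∈ logBundle p q) :
    polLog (F P).1 (starMap F (star P)).1 = (F P).2 + (starMap F (star P)).2 := by
  rw [starMap, star_star, Prod.fst_star, Prod.snd_star, polLog_star_self hP.1, ← hP.2, star_def,
    add_conj]

lemma eventually_differentiableAt_polPair {F F' : CMat p q × ℂ → CMat p q × ℂ}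
    (hF : ∀ᶠ x in 𝓝 0, DifferentiableAt ℂ F x) (hF' : ∀ᶠ x in 𝓝 0, DifferentiableAt ℂ F' x)
    (hF0 : F 0 = 0) (hF0' : F' 0 = 0) :
    ∀ᶠ x in 𝓝 (0 : CMat p q × ℂ × CMat p q), DifferentiableAt ℂ (fun x =>
      (F (x.1, x.2.1)).2 + (F' (polConj x)).2 -
        polLog (F (x.1, x.2.1)).1 (F' (polConj x)).1) x := by
  let base : CMat p q × ℂ × CMat p q → CMat p q × ℂ := fun x => (x.1, x.2.1)
  have hbase : Tendsto base (𝓝 0) (𝓝 0) := Continuous.tendsto' (by fun_prop) _ _ rfl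
  have hFlim : Tendsto F (𝓝 0) (𝓝 0) := by simpa [hF0] using hF.self_of_nhds.continuousAt.tendsto
  have hFlim' : Tendsto F' (𝓝 0) (𝓝 0) := by
    simpa [hF0'] using hF'.self_of_nhds.continuousAt.tendsto
  have hpair : Tendsto (fun x => ((F (base x)).1, (F' (polConj x)).1)) (𝓝 0) (𝓝 0) :=
    ((continuous_fst.tendsto' _ _ rfl).comp (hFlim.comp hbase)).prodMk_nhds
      ((continuous_fst.tendsto' _ _ rfl).comp (hFlim'.comp tendsto_polConj))
  filter_upwards [hbase.eventually hF, tendsto_polConj.eventually hF',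
    eventually_differentiableAt_polConj, hpair.eventually eventually_differentiableAt_polLog]
    with x hFx hFx' hconj hlog
  have hFbase : DifferentiableAt ℂ (fun x => F (base x)) x :=
    hFx.comp x (f := base) (by fun_prop)
  have hFconj : DifferentiableAt ℂ (fun x => F' (polConj x)) x := hFx'.comp x hconj
  exact (hFbase.snd.add hFconj.snd).sub
    (hlog.comp x (f := fun x => ((F (base x)).1, (F' (polConj x)).1))
      (hFbase.fst.prodMk hFconj.fst))

lemma isPolPair_starMap {F : CMat p q × ℂ → CMat p q × ℂ}
    (hF : ∀ᶠ x in 𝓝 0, DifferentiableAt ℂ F x) (hF0 : F 0 = 0)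
    (hmaps : ∀ᶠ x in 𝓝 0, x ∈ logBundle p q → F x ∈ logBundle p q) : IsPolPair F (starMap F) := by
  have hF' := eventually_differentiableAt_starMap hF
  have hF0' : starMap F 0 = 0 := by simp [starMap, hF0]
  refine ⟨hF, hF', hF0, hF0', ?_⟩
  refine (eventually_eq_zero_of_logBundle (eventually_differentiableAt_polPair hF hF' hF0 hF0')
    (hmaps.mono fun P hP hPM => ?_)).mono fun x hx => sub_eq_zero.1 hx
  simp only [polConj_star hPM, polLog_starMap_star (hP hPM), Prod.mk.eta, sub_self]

namespace IsPolPair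

variable {F F' : CMat p q × ℂ → CMat p q × ℂ}

lemma tendsto (h : IsPolPair F F') : Tendsto F (𝓝 0) (𝓝 0) := by
  simpa [h.map_zero] using h.diff.self_of_nhds.continuousAt.tendsto

lemma symm (h : IsPolPair F F') : IsPolPair F' F := by
  refine ⟨h.diff', h.diff, h.map_zero', h.map_zero, ?_⟩
  let swap : CMat p q × ℂ × CMat p q → CMat p q × ℂ × CMat p q := fun x =>
    ((polConj x).1, (polConj x).2, x.1)
  have hswap : Tendsto swap (𝓝 0) (𝓝 0) :=
    ((continuous_fst.tendsto' _ _ rfl).comp tendsto_polConj).prodMk_nhds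
      (((continuous_snd.tendsto' _ _ rfl).comp tendsto_polConj).prodMk_nhds
        (continuous_fst.tendsto' _ _ rfl))
  filter_upwards [hswap.eventually h.eq] with x hx
  have hconj : polConj (swap x) = (x.1, x.2.1) := by
    simp only [swap, polConj, polLog_comm x.2.2 x.1, sub_sub_cancel]
  rw [hconj] at hx
  rw [add_comm, polLog_comm]
  exact hx

lemma eventually_snd_eq_zero (h : IsPolPair F F') :
    ∀ᶠ Z in 𝓝 (0 : CMat p q), (F (Z, 0)).2 = 0 := by
  have hincl : Tendsto (fun Z : CMat p q => (Z, (0 : ℂ), (0 : CMat p q))) (𝓝 0) (𝓝 0) :=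
    Continuous.tendsto' (by fun_prop) _ _ rfl
  filter_upwards [hincl.eventually h.eq] with Z hZ
  have hconj : polConj (Z, 0, 0) = 0 := by simp [polConj]
  simpa [hconj, h.map_zero'] using hZ

lemma hasFDerivAt (h : IsPolPair F F') : HasFDerivAt F (fderiv ℂ F 0) 0 :=
  h.diff.self_of_nhds.hasFDerivAt

lemma hasFDerivAt_comp_graph (h : IsPolPair F F') {g : CMat p q → ℂ} {g' : CMat p q →L[ℂ] ℂ}
    (hg : HasFDerivAt g g' 0) (hg0 : g 0 = 0) : HasFDerivAt (fun Z => F (Z, g Z))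
      ((fderiv ℂ F 0).comp ((ContinuousLinearMap.id ℂ (CMat p q)).prod g')) 0 := by
  have hF : HasFDerivAt F (fderiv ℂ F 0) ((0 : CMat p q), g 0) := by
    rw [hg0]
    exact h.hasFDerivAt
  exact HasFDerivAt.comp (0 : CMat p q) (f := fun Z : CMat p q => (Z, g Z)) hF
    ((hasFDerivAt_id _).prodMk hg)

lemma hasFDerivAt_inl (h : IsPolPair F F') : HasFDerivAt (fun Z => F (Z, 0))
    ((fderiv ℂ F 0).comp (ContinuousLinearMap.inl ℂ (CMat p q) ℂ)) 0 :=
  h.hasFDerivAt_comp_graph (hasFDerivAt_const (0 : ℂ) 0) rfl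

lemma fderiv_inl_snd (h : IsPolPair F F') (X : CMat p q) : (fderiv ℂ F 0 (X, 0)).2 = 0 := by
  have hzero : HasFDerivAt (fun Z => (F (Z, 0)).2) (0 : CMat p q →L[ℂ] ℂ) 0 :=
    (hasFDerivAt_const _ _).congr_of_eventuallyEq h.eventually_snd_eq_zero
  exact DFunLike.congr_fun (h.hasFDerivAt_inl.snd.unique hzero) X

lemma fderiv_apply (h : IsPolPair F F') (X : CMat p q) (c : ℂ) :
    fderiv ℂ F 0 (X, c) = (linPart F X + c • vertPart F, c * scalPart F) := by
  have hsplit : (X, c) = (X, (0 : ℂ)) + c • ((0 : CMat p q), (1 : ℂ)) := by simp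
  rw [hsplit, map_add, map_smul]
  refine Prod.ext rfl ?_
  simp [h.fderiv_inl_snd, scalPart]

lemma eventually_exp_snd (h : IsPolPair F F') :
    ∀ᶠ x in 𝓝 (0 : CMat p q × CMat p q), cexp (F (x.1, polLog x.1 x.2)).2 =
      polNorm (F (x.1, polLog x.1 x.2)).1 (F' (x.2, 0)).1 := by
  have hfst : Tendsto (fun x : CMat p q × CMat p q => x.1) (𝓝 0) (𝓝 0) :=
    continuous_fst.tendsto' _ _ rfl
  have hsnd : Tendsto (fun x : CMat p q × CMat p q => x.2) (𝓝 0) (𝓝 0) :=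
    continuous_snd.tendsto' _ _ rfl
  have hlog := tendsto_polLog hfst hsnd
  have hF : Tendsto (fun x : CMat p q × CMat p q => (F (x.1, polLog x.1 x.2)).1) (𝓝 0) (𝓝 0) :=
    (continuous_fst.tendsto' _ _ rfl).comp (h.tendsto.comp (hfst.prodMk_nhds hlog))
  have hF' : Tendsto (fun x : CMat p q × CMat p q => (F' (x.2, 0)).1) (𝓝 0) (𝓝 0) :=
    (continuous_fst.tendsto' _ _ rfl).comp
      (h.symm.tendsto.comp (hsnd.prodMk_nhds tendsto_const_nhds))
  filter_upwards [(hfst.prodMk_nhds (hlog.prodMk_nhds hsnd)).eventually h.eq,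
    hsnd.eventually h.symm.eventually_snd_eq_zero,
    (hF.prodMk_nhds hF').eventually eventually_polNorm_mem_slitPlane] with x hx hx0 hslit
  simp only [polConj, sub_self, hx0, add_zero] at hx
  rw [hx, polLog, Complex.exp_log (slitPlane_ne_zero hslit)]

lemma eventually_eventually_exp_snd (h : IsPolPair F F') :
    ∀ᶠ Y in 𝓝 (0 : CMat p q), ∀ᶠ Z in 𝓝 (0 : CMat p q),
      cexp (F (Z, polLog Z Y)).2 = polNorm (F (Z, polLog Z Y)).1 (F' (Y, 0)).1 := by
  have hswap : ∀ᶠ x in 𝓝 (0 : CMat p q × CMat p q), cexp (F (x.2, polLog x.2 x.1)).2 =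
      polNorm (F (x.2, polLog x.2 x.1)).1 (F' (x.1, 0)).1 :=
    (continuous_swap.tendsto' 0 0 rfl).eventually h.eventually_exp_snd
  exact hswap.curry_nhds

lemma eventually_traceForm_linPart (h : IsPolPair F F') :
    ∀ᶠ Y in 𝓝 (0 : CMat p q), ∀ X, traceForm (linPart F X) (F' (Y, 0)).1 =
      (scalPart F + traceForm (vertPart F) (F' (Y, 0)).1) * traceForm X Y := by
  filter_upwards [h.eventually_eventually_exp_snd] with Y hY X
  have hF := h.hasFDerivAt_comp_graph (hasFDerivAt_polLog_left Y) (polLog_zero_left Y)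
  have hnorm : HasFDerivAt (fun Z => polNorm Z (F' (Y, 0)).1) (-(traceForm.flip (F' (Y, 0)).1))
      (F (0, polLog 0 Y)).1 := by
    rw [polLog_zero_left, Prod.mk_zero_zero, h.map_zero]
    exact hasFDerivAt_polNorm_left _
  have hcomp := HasFDerivAt.comp (0 : CMat p q) hnorm hF.fst
  have hderiv := DFunLike.congr_fun (hF.snd.cexp.unique (hcomp.congr_of_eventuallyEq hY)) X
  have hgraph : (ContinuousLinearMap.id ℂ (CMat p q)).prod (-(traceForm.flip Y)) X =
    (X, -traceForm X Y) := rfl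
  simp only [_root_.smul_apply, ContinuousLinearMap.comp_apply, hgraph, h.fderiv_apply,
    ContinuousLinearMap.coe_snd', ContinuousLinearMap.coe_fst', _root_.neg_apply,
    ContinuousLinearMap.flip_apply, map_add, map_smul, polLog_zero_left, Prod.mk_zero_zero,
    h.map_zero, Prod.snd_zero, Complex.exp_zero, smul_eq_mul] at hderiv
  linear_combination hderiv

lemma traceForm_linPart_linPart (h : IsPolPair F F') (X X' : CMat p q) :
    traceForm (linPart F X) (linPart F' X') = scalPart F * traceForm X X' := by
  have hF' := h.symm.hasFDerivAt_inl.fst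
  have hleft := (traceForm (linPart F X)).hasFDerivAt.comp (0 : CMat p q) hF'
  have hright := (((traceForm (vertPart F)).hasFDerivAt.comp (0 : CMat p q) hF').const_add
    (scalPart F)).mul (traceForm X).hasFDerivAt
  have hderiv := DFunLike.congr_fun (hleft.unique (hright.congr_of_eventuallyEq
    (h.eventually_traceForm_linPart.mono fun Y hY => hY X))) X'
  have hzero : ((0 : CMat p q), (0 : ℂ)) = 0 := rfl
  simpa [hzero, h.map_zero', linPart_apply] using hderiv

lemma scalPart_eq (h : IsPolPair F F') (i : Fin p) (j : Fin q) : scalPart F = scalPart F' := by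
  let X : CMat p q := Pi.single i (Pi.single j 1)
  have hX : traceForm X X = 1 := by simp [X, traceForm_single_left]
  have hpair := h.traceForm_linPart_linPart X X
  rw [traceForm_comm, h.symm.traceForm_linPart_linPart, hX, mul_one, mul_one] at hpair
  exact hpair.symm

end IsPolPair

end PolarizedPairs

section VerticalPart

variable {p q : ℕ}

lemma tendsto_sub_div_of_hasStrictFDerivAt {α E : Type*} [NormedAddCommGroup E] [NormedSpace ℂ E]
    {f : E × ℂ → ℂ} {L : E × ℂ →L[ℂ] ℂ} (hf : HasStrictFDerivAt f L 0) {l : Filter α}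
    {x : α → E} {η ρ : α → ℂ} {a : ℂ} (hx : Tendsto x l (𝓝 0)) (hη : Tendsto η l (𝓝 0))
    (hρ : ∀ᶠ t in l, ρ t ≠ 0) (ha : Tendsto (fun t => η t / ρ t) l (𝓝 a)) :
    Tendsto (fun t => (f (x t, η t) - f (x t, 0)) / ρ t) l (𝓝 (a * L (0, 1))) := by
  have hpair : Tendsto (fun t => ((x t, η t), (x t, (0 : ℂ)))) l (𝓝 ((0 : E × ℂ), (0 : E × ℂ))) :=
    (hx.prodMk_nhds hη).prodMk_nhds (hx.prodMk_nhds tendsto_const_nhds)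
  have hdiff : (fun t => (x t, η t) - (x t, (0 : ℂ))) =O[l] ρ :=
    (Asymptotics.isBigO_of_le l (g := η) fun t => by simp [Prod.norm_def]).trans
      (Asymptotics.isBigO_of_div_tendsto_nhds (hρ.mono fun t ht h0 => absurd h0 ht) _ ha)
  have herror := ((hf.isLittleO.comp_tendsto hpair).trans_isBigO hdiff).tendsto_div_nhds_zero
  have hsum := herror.add (ha.mul_const (L (0, 1)))
  rw [zero_add] at hsum
  refine hsum.congr fun t => ?_
  have hL : L ((x t, η t) - (x t, 0)) = η t * L (0, 1) := by
    rw [← smul_eq_mul, ← map_smul]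
    simp
  simp only [Function.comp_apply, hL]
  ring

lemma polNorm_single_sub_single {i j : Fin p} {a b : Fin q} (hij : i ≠ j) (hab : a ≠ b)
    {c : ℂ} (hc : c ^ 2 = 1) (t τ : ℂ) :
    polNorm (t • (Pi.single i (Pi.single a c) - Pi.single j (Pi.single b 1)) : CMat p q)
      (τ • (Pi.single i (Pi.single a 1) + Pi.single j (Pi.single b c)) : CMat p q) =
      1 - t ^ 2 * τ ^ 2 := by
  have hX : Matrix.of (Pi.single i (Pi.single a c) - Pi.single j (Pi.single b 1) : CMat p q) =
      Matrix.single i a c - Matrix.single j b 1 := by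
    simp only [Matrix.single_eq_of_single_single]
    rfl
  have hY : Matrix.of (Pi.single i (Pi.single a 1) + Pi.single j (Pi.single b c) : CMat p q) =
      Matrix.single i a 1 + Matrix.single j b c := by
    simp only [Matrix.single_eq_of_single_single]
    rfl
  have hprod : (Matrix.single i a c - Matrix.single j b 1 : Matrix (Fin p) (Fin q) ℂ) *
      (Matrix.single i a 1 + Matrix.single j b c : Matrix (Fin p) (Fin q) ℂ)ᵀ =
      Matrix.diagonal (Pi.single i c - Pi.single j c) := by
    rw [transpose_add, transpose_single, transpose_single, Matrix.sub_mul, Matrix.mul_add,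
      Matrix.mul_add, single_mul_single_same, single_mul_single_same,
      single_mul_single_of_ne _ _ _ _ hab, single_mul_single_of_ne _ _ _ _ hab.symm]
    ext k l
    simp only [Matrix.single_apply, Matrix.diagonal_apply, Pi.single_apply, Pi.sub_apply,
      Matrix.sub_apply, Matrix.add_apply, Matrix.zero_apply]
    grind
  rw [polNorm_smul_left, polNorm, hX, ← smul_of, ← smul_of, hY, smul_smul, transpose_smul,
    Matrix.mul_smul, hprod, ← Matrix.diagonal_smul, ← Matrix.diagonal_one, Matrix.diagonal_sub,
    det_diagonal, Fintype.prod_eq_mul i j hij fun k hk => by simp [hk.1, hk.2]]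
  simp only [Pi.smul_apply, Pi.sub_apply, Pi.single_eq_same, Pi.single_eq_of_ne hij,
    Pi.single_eq_of_ne hij.symm, smul_eq_mul]
  linear_combination (-(t ^ 2 * τ ^ 2)) * hc

lemma traceForm_eq_zero_of_polNorm_smul {X P : CMat p q}
    (hXP : ∀ t τ : ℂ, polNorm (t • X) (τ • P) = 1 - t ^ 2 * τ ^ 2) : traceForm X P = 0 := by
  have hnorm : (fun t : ℂ => polNorm (t • X) P) = fun t => 1 - t ^ 2 := by
    funext t
    simpa using hXP t 1
  have hderiv := hasDerivAt_polNorm_smul X P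
  rw [hnorm] at hderiv
  simpa using hderiv.unique (((hasDerivAt_id (0 : ℂ)).pow 2).const_sub 1)

lemma tendsto_polLog_smul_div_sq {X P : CMat p q}
    (hXP : ∀ t τ : ℂ, polNorm (t • X) (τ • P) = 1 - t ^ 2 * τ ^ 2) (τ : ℂ) :
    Tendsto (fun t : ℂ => polLog (t • X) (τ • P) / t ^ 2) (𝓝[≠] 0) (𝓝 (-τ ^ 2)) := by
  have hderiv : HasDerivAt (fun x : ℂ => Complex.log (1 - x * τ ^ 2)) (-τ ^ 2) 0 := by
    have hlinear : HasDerivAt (fun x : ℂ => 1 - x * τ ^ 2) (-τ ^ 2) 0 := by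
      simpa using ((hasDerivAt_id (0 : ℂ)).mul_const (τ ^ 2)).const_sub 1
    simpa using hlinear.clog (by simp)
  have hsq : Tendsto (fun t : ℂ => t ^ 2) (𝓝[≠] 0) (𝓝[≠] 0) :=
    tendsto_nhdsWithin_iff.2
      ⟨((continuous_pow 2).tendsto' (0 : ℂ) 0 (by simp)).mono_left nhdsWithin_le_nhds,
        eventually_mem_nhdsWithin.mono fun t ht => pow_ne_zero 2 ht⟩
  refine ((hasDerivAt_iff_tendsto_slope_zero.1 hderiv).comp hsq).congr fun t => ?_
  simp [polLog, hXP, div_eq_inv_mul]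

namespace IsPolPair

variable {F F' : CMat p q × ℂ → CMat p q × ℂ}

lemma linPart_bijective (h : IsPolPair F F') (hγ : scalPart F ≠ 0) :
    Function.Bijective (linPart F) := by
  have hinj : Function.Injective (linPart F : CMat p q →ₗ[ℂ] CMat p q) := by
    rw [injective_iff_map_eq_zero]
    intro X hX
    have hX : linPart F X = 0 := hX
    refine eq_zero_of_forall_traceForm_eq_zero fun X' => ?_
    have hpair := h.traceForm_linPart_linPart X X'
    rw [hX, _root_.map_zero, _root_.zero_apply, traceForm_comm] at hpair
    exact (mul_eq_zero.1 hpair.symm).resolve_left hγ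
  exact ⟨hinj, LinearMap.injective_iff_surjective.1 hinj⟩

lemma eventually_fst_eq (h : IsPolPair F F') (hγ : scalPart F ≠ 0) {U : CMat p q}
    (hU : linPart F U = vertPart F) :
    ∀ᶠ Y in 𝓝 (0 : CMat p q), 1 - traceForm U Y ≠ 0 ∧
      (F' (Y, 0)).1 = (1 - traceForm U Y)⁻¹ • linPart F' Y ∧
      scalPart F + traceForm (vertPart F) (F' (Y, 0)).1 = scalPart F * (1 - traceForm U Y)⁻¹ := by
  filter_upwards [h.eventually_traceForm_linPart] with Y hY
  have hmul : (scalPart F + traceForm (vertPart F) (F' (Y, 0)).1) * (1 - traceForm U Y) =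
      scalPart F := by
    have hYU := hY U
    rw [hU] at hYU
    linear_combination hYU
  have hne : 1 - traceForm U Y ≠ 0 := fun h0 => hγ (by rw [← hmul, h0, mul_zero])
  have hscal : scalPart F + traceForm (vertPart F) (F' (Y, 0)).1 =
      scalPart F * (1 - traceForm U Y)⁻¹ := by
    rw [← div_eq_mul_inv, eq_div_iff hne, hmul]
  refine ⟨hne, ?_, hscal⟩
  rw [← sub_eq_zero]
  refine eq_zero_of_forall_traceForm_eq_zero fun X' => ?_
  obtain ⟨X, rfl⟩ := (h.linPart_bijective hγ).2 X'
  rw [map_sub, map_smul, hY X, h.traceForm_linPart_linPart, hscal, smul_eq_mul]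
  ring

lemma exists_hasStrictFDerivAt_exp_snd_sub_polNorm (h : IsPolPair F F') (Y : CMat p q) :
    ∃ L : CMat p q × ℂ →L[ℂ] ℂ,
      HasStrictFDerivAt (fun x => cexp (F x).2 - polNorm (F x).1 Y) L 0 ∧
      L (0, 1) = scalPart F + traceForm (vertPart F) Y := by
  have hdiff : ∀ᶠ x in 𝓝 0, DifferentiableAt ℂ (fun x => cexp (F x).2 - polNorm (F x).1 Y) x := by
    filter_upwards [h.diff] with x hx
    have hnorm : DifferentiableAt ℂ (fun x => polNorm (F x).1 Y) x :=
      (differentiable_polNorm_left Y _).comp x hx.fst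
    exact hx.snd.cexp.sub hnorm
  have hnorm : HasFDerivAt (fun Z => polNorm Z Y) (-(traceForm.flip Y)) (F 0).1 := by
    rw [h.map_zero]
    exact hasFDerivAt_polNorm_left _
  have hcomp := HasFDerivAt.comp (0 : CMat p q × ℂ) hnorm h.hasFDerivAt.fst
  have hderiv := h.hasFDerivAt.snd.cexp.sub hcomp
  refine ⟨_, hasStrictFDerivAt_of_eventually_differentiableAt hdiff, ?_⟩
  have hfderiv : fderiv ℂ (fun x => cexp (F x).2 - polNorm (F x).1 Y) 0 = _ := hderiv.fderiv
  rw [hfderiv]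
  simp [h.map_zero, h.fderiv_apply]

lemma tendsto_polNorm_sub_one_div_sq (h : IsPolPair F F') {X Y : CMat p q} {a : ℂ}
    (hexp : ∀ᶠ Z in 𝓝 (0 : CMat p q),
      cexp (F (Z, polLog Z Y)).2 = polNorm (F (Z, polLog Z Y)).1 (F' (Y, 0)).1)
    (ha : Tendsto (fun t : ℂ => polLog (t • X) Y / t ^ 2) (𝓝[≠] 0) (𝓝 a)) :
    Tendsto (fun t : ℂ => (polNorm (F (t • X, 0)).1 (F' (Y, 0)).1 - 1) / t ^ 2) (𝓝[≠] 0)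
      (𝓝 (a * (scalPart F + traceForm (vertPart F) (F' (Y, 0)).1))) := by
  obtain ⟨L, hL, hL1⟩ := h.exists_hasStrictFDerivAt_exp_snd_sub_polNorm (F' (Y, 0)).1
  have hline : Tendsto (fun t : ℂ => t • X) (𝓝[≠] 0) (𝓝 0) :=
    (tendsto_smul_zero X).mono_left nhdsWithin_le_nhds
  have hlog : Tendsto (fun t : ℂ => polLog (t • X) Y) (𝓝[≠] 0) (𝓝 0) := by
    have hcont := (hasFDerivAt_polLog_left Y).continuousAt.tendsto
    rw [polLog_zero_left] at hcont
    exact hcont.comp hline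
  rw [← hL1]
  refine (tendsto_sub_div_of_hasStrictFDerivAt hL hline hlog
    (eventually_mem_nhdsWithin.mono fun t ht => pow_ne_zero 2 ht) ha).congr' ?_
  filter_upwards [hline.eventually hexp, hline.eventually h.eventually_snd_eq_zero] with t ht ht0
  rw [ht, ht0, Complex.exp_zero]
  ring

lemma tendsto_polNorm_linPart_div_sq (h : IsPolPair F F') (hγ : scalPart F' ≠ 0)
    {X V : CMat p q} {Q : Polynomial ℂ}
    (hQ : ∀ s : ℂ, polNorm (s • linPart F X) V = 1 + s ^ 2 * Q.eval s) (r : ℂ) :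
    Tendsto (fun t : ℂ => (polNorm (F (t • X, 0)).1 (r • V) - 1) / t ^ 2) (𝓝[≠] 0)
      (𝓝 (r ^ 2 * Q.eval 0)) := by
  obtain ⟨U, hU⟩ := (h.symm.linPart_bijective hγ).2 (vertPart F')
  let s : ℂ → ℂ := fun t => r * (1 - t * traceForm U X)⁻¹
  have hs : ContinuousAt s 0 :=
    continuousAt_const.mul (ContinuousAt.inv₀ (by fun_prop) (by simp))
  have hlim : ContinuousAt (fun t => s t ^ 2 * Q.eval (s t * t)) 0 :=
    (hs.pow 2).mul (Q.continuous.continuousAt.comp (f := fun t => s t * t) (by fun_prop))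
  have hlim0 : s 0 ^ 2 * Q.eval (s 0 * 0) = r ^ 2 * Q.eval 0 := by simp [s]
  rw [← hlim0]
  refine (hlim.tendsto.mono_left nhdsWithin_le_nhds).congr' ?_
  filter_upwards [((tendsto_smul_zero X).eventually (h.symm.eventually_fst_eq hγ hU)).filter_mono
    nhdsWithin_le_nhds, self_mem_nhdsWithin] with t ⟨_, ht, _⟩ ht0
  have ht0 : t ≠ 0 := ht0
  have hs_smul : polNorm (F (t • X, 0)).1 (r • V) = polNorm ((s t * t) • linPart F X) V := by
    rw [ht, ← polNorm_smul_left, map_smul, map_smul, smul_smul, smul_smul, smul_eq_mul]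
  rw [hs_smul, hQ]
  field_simp
  ring

lemma eventually_eval_zero_eq (h : IsPolPair F F') (hγ : scalPart F ≠ 0) (hγ' : scalPart F' ≠ 0)
    {X P U : CMat p q} (hXP : ∀ t τ : ℂ, polNorm (t • X) (τ • P) = 1 - t ^ 2 * τ ^ 2)
    (hU : linPart F U = vertPart F) {Q : Polynomial ℂ}
    (hQ : ∀ s : ℂ, polNorm (s • linPart F X) (linPart F' P) = 1 + s ^ 2 * Q.eval s) :
    ∀ᶠ τ in 𝓝[≠] (0 : ℂ), Q.eval 0 = -(scalPart F * (1 - τ * traceForm U P)) := by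
  have hline : Tendsto (fun τ : ℂ => τ • P) (𝓝[≠] 0) (𝓝 0) :=
    (tendsto_smul_zero P).mono_left nhdsWithin_le_nhds
  filter_upwards [hline.eventually h.eventually_eventually_exp_snd,
    hline.eventually (h.eventually_fst_eq hγ hU), self_mem_nhdsWithin] with τ hexp hfst hτ
  obtain ⟨hne, hF', hscal⟩ := hfst
  rw [map_smul, smul_eq_mul] at hne hF' hscal
  rw [map_smul, smul_smul] at hF'
  have hlim := h.tendsto_polNorm_sub_one_div_sq hexp (tendsto_polLog_smul_div_sq hXP τ)
  rw [hscal, hF'] at hlim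
  have heq := tendsto_nhds_unique (h.tendsto_polNorm_linPart_div_sq hγ' hQ _) hlim
  have hτ : τ ≠ 0 := hτ
  field_simp at heq
  linear_combination heq

lemma traceForm_eq_zero_of_polNorm (h : IsPolPair F F') (hγ : scalPart F ≠ 0)
    (hγ' : scalPart F' ≠ 0) {X P U : CMat p q}
    (hXP : ∀ t τ : ℂ, polNorm (t • X) (τ • P) = 1 - t ^ 2 * τ ^ 2)
    (hU : linPart F U = vertPart F) : traceForm U P = 0 := by
  obtain ⟨Q, hQ⟩ := exists_polNorm_smul_eq (linPart F X) (linPart F' P)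
  simp only [h.traceForm_linPart_linPart, traceForm_eq_zero_of_polNorm_smul hXP, mul_zero,
    sub_zero] at hQ
  have heval := h.eventually_eval_zero_eq hγ hγ' hXP hU hQ
  have hlim : Tendsto (fun τ : ℂ => -(scalPart F * (1 - τ * traceForm U P))) (𝓝[≠] 0)
      (𝓝 (-(scalPart F * (1 - 0 * traceForm U P)))) :=
    (Continuous.tendsto (by fun_prop) 0).mono_left nhdsWithin_le_nhds
  have heval0 := tendsto_nhds_unique_of_eventuallyEq tendsto_const_nhds hlim heval
  obtain ⟨τ, hτ, hτ0⟩ := (heval.and self_mem_nhdsWithin).exists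
  have hmul : (scalPart F * τ) * traceForm U P = 0 := by linear_combination heval0 - hτ
  exact (mul_eq_zero.1 hmul).resolve_left (mul_ne_zero hγ hτ0)

lemma vertPart_eq_zero (h : IsPolPair F F') (hp : 2 ≤ p) (hq : 2 ≤ q) (hγ : scalPart F ≠ 0) :
    vertPart F = 0 := by
  have hγ' : scalPart F' ≠ 0 := by rwa [← h.scalPart_eq ⟨0, by lia⟩ ⟨0, by lia⟩]
  obtain ⟨U, hU⟩ := (h.linPart_bijective hγ).2 (vertPart F)
  suffices U = 0 by rw [← hU, this, _root_.map_zero]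
  ext i a
  have : Nontrivial (Fin p) := Fin.nontrivial_iff_two_le.2 hp
  have : Nontrivial (Fin q) := Fin.nontrivial_iff_two_le.2 hq
  obtain ⟨j, hij⟩ := exists_ne i
  obtain ⟨b, hab⟩ := exists_ne a
  have hsum : ∀ c : ℂ, c ^ 2 = 1 → U i a + c * U j b = 0 := fun c hc => by
    have htrace := h.traceForm_eq_zero_of_polNorm hγ hγ'
      (polNorm_single_sub_single hij.symm hab.symm hc) hU
    rwa [traceForm_comm, map_add, _root_.add_apply, traceForm_single_left, traceForm_single_left,
      one_mul] at htrace
  rw [Pi.zero_apply, Pi.zero_apply]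
  linear_combination (hsum 1 (by norm_num) + hsum (-1) (by norm_num)) / 2

end IsPolPair

end VerticalPart

section Dichotomy

variable {p q : ℕ} {F : CMat p q × ℂ → CMat p q × ℂ} {m : CMat p q × ℂ}

lemma eventually_fst_mem_typeIDomain (hm : m.1 ∈ typeIDomain p q) :
    ∀ᶠ x in 𝓝 m, x.1 ∈ typeIDomain p q :=
  continuous_fst.continuousAt.eventually (isOpen_typeIDomain.mem_nhds hm)

/-- `F` is holomorphic near the point `m` of the hypersurface `2 Re ω = log N(Z)` and maps the
hypersurface into itself near `m`. -/
structure PreservesAt (F : CMat p q × ℂ → CMat p q × ℂ) (m : CMat p q × ℂ) : Prop where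
  mem : m ∈ logBundle p q
  diff : ∀ᶠ x in 𝓝 m, DifferentiableAt ℂ F x
  maps : ∀ᶠ x in 𝓝 m, x ∈ logBundle p q → F x ∈ logBundle p q

namespace PreservesAt

lemma eventually (h : PreservesAt F m) : ∀ᶠ x in 𝓝 m, x ∈ logBundle p q → PreservesAt F x := by
  filter_upwards [h.diff.eventually_nhds, h.maps.eventually_nhds] with x hdiff hmaps hx
  exact ⟨hx, hdiff, hmaps⟩

lemma apply_mem (h : PreservesAt F m) : F m ∈ logBundle p q := h.maps.self_of_nhds h.mem

lemma eventually_fst_apply_mem (h : PreservesAt F m) : ∀ᶠ x in 𝓝 m, (F x).1 ∈ typeIDomain p q :=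
  h.diff.self_of_nhds.continuousAt.eventually (eventually_fst_mem_typeIDomain h.apply_mem.1)

lemma isPolPair (h : PreservesAt F 0) (h0 : F 0 = 0) : IsPolPair F (starMap F) :=
  isPolPair_starMap h.diff h0 h.maps

end PreservesAt

lemma linPart_starMap (hF : DifferentiableAt ℂ F 0) (X : CMat p q) :
    linPart (starMap F) (star X) = star (linPart F X) := by
  have hstar := hF.hasFDerivAt.star_star
  rw [star_zero] at hstar
  have hfderiv : fderiv ℂ (starMap F) 0 = _ := hstar.fderiv
  have hX : star ((star X, 0) : CMat p q × ℂ) = (X, 0) := Prod.ext (star_star X) (star_zero _)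
  rw [linPart_apply, linPart_apply, hfderiv]
  simp [hX]

lemma PreservesAt.fderiv_eq_zero_or (h : PreservesAt F 0) (h0 : F 0 = 0) (hp : 2 ≤ p)
    (hq : 2 ≤ q) : (∀ X, fderiv ℂ F 0 (X, 0) = 0) ∨ scalPart F ≠ 0 ∧ vertPart F = 0 := by
  by_cases hγ : scalPart F = 0
  · refine Or.inl fun X => ?_
    have hnorm := (h.isPolPair h0).traceForm_linPart_linPart X (star X)
    rw [linPart_starMap h.diff.self_of_nhds, hγ, zero_mul] at hnorm
    rw [(h.isPolPair h0).fderiv_apply, traceForm_star_self_eq_zero hnorm]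
    simp
  · exact Or.inr ⟨hγ, (h.isPolPair h0).vertPart_eq_zero hp hq hγ⟩

/-- The map `(Z, ω) ↦ (ψ Z, ω + H Z)`. -/
def fibMap (ψ : CMat p q → CMat p q) (H : CMat p q → ℂ) : CMat p q × ℂ → CMat p q × ℂ :=
  fun P => (ψ P.1, P.2 + H P.1)

lemma fibMap_fibMap (ψ₂ ψ₁ : CMat p q → CMat p q) (H₂ H₁ : CMat p q → ℂ) (P : CMat p q × ℂ) :
    fibMap ψ₂ H₂ (fibMap ψ₁ H₁ P) = fibMap (ψ₂ ∘ ψ₁) (fun Z => H₁ Z + H₂ (ψ₁ Z)) P := by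
  simp [fibMap, add_assoc]

lemma IsFibAut.hasFDerivAt_fibMap {ψ : CMat p q → CMat p q} {H : CMat p q → ℂ}
    (h : IsFibAut ψ H) {P : CMat p q × ℂ} (hP : P.1 ∈ typeIDomain p q) :
    HasFDerivAt (fibMap ψ H) (((fderiv ℂ ψ P.1).comp (.fst ℂ (CMat p q) ℂ)).prod
      (.snd ℂ (CMat p q) ℂ + (fderiv ℂ H P.1).comp (.fst ℂ (CMat p q) ℂ))) P := by
  have hΩ := isOpen_typeIDomain.mem_nhds hP
  exact (HasFDerivAt.comp P (h.1.1.differentiableAt hΩ).hasFDerivAt hasFDerivAt_fst).prodMk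
    (hasFDerivAt_snd.add
      (HasFDerivAt.comp P (h.2.1.differentiableAt hΩ).hasFDerivAt hasFDerivAt_fst))

/-- `Φ` and `Φ'` are mutually inverse fibred automorphisms. -/
structure IsBundleAut (Φ Φ' : CMat p q × ℂ → CMat p q × ℂ) : Prop where
  fib : ∃ ψ H, IsFibAut ψ H ∧ Φ = fibMap ψ H
  fib' : ∃ ψ H, IsFibAut ψ H ∧ Φ' = fibMap ψ H
  left_inv : ∀ P, P.1 ∈ typeIDomain p q → Φ' (Φ P) = P
  right_inv : ∀ P, P.1 ∈ typeIDomain p q → Φ (Φ' P) = P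

namespace IsBundleAut

variable {Φ Φ' Φ₂ Φ₂' : CMat p q × ℂ → CMat p q × ℂ} {P : CMat p q × ℂ}

lemma symm (h : IsBundleAut Φ Φ') : IsBundleAut Φ' Φ := ⟨h.fib', h.fib, h.right_inv, h.left_inv⟩

lemma mapsTo (h : IsBundleAut Φ Φ') (hP : P.1 ∈ typeIDomain p q) : (Φ P).1 ∈ typeIDomain p q := by
  obtain ⟨ψ, H, hψ, rfl⟩ := h.fib
  exact hψ.1.2.1 hP

lemma mapsTo_logBundle (h : IsBundleAut Φ Φ') (hP : P ∈ logBundle p q) : Φ P ∈ logBundle p q := by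
  refine ⟨h.mapsTo hP.1, ?_⟩
  obtain ⟨ψ, H, hψ, rfl⟩ := h.fib
  simp only [fibMap, add_re]
  rw [hψ.2.2 P.1 hP.1, ← hP.2]
  ring

lemma differentiableAt (h : IsBundleAut Φ Φ') (hP : P.1 ∈ typeIDomain p q) :
    DifferentiableAt ℂ Φ P := by
  obtain ⟨ψ, H, hψ, rfl⟩ := h.fib
  exact (hψ.hasFDerivAt_fibMap hP).differentiableAt

lemma fderiv_zero_left (h : IsBundleAut Φ Φ') (hP : P.1 ∈ typeIDomain p q) (s : ℂ) :
    fderiv ℂ Φ P (0, s) = (0, s) := by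
  obtain ⟨ψ, H, hψ, rfl⟩ := h.fib
  rw [(hψ.hasFDerivAt_fibMap hP).fderiv]
  simp

lemma fderiv_fderiv (h : IsBundleAut Φ Φ') (hP : P.1 ∈ typeIDomain p q) (v : CMat p q × ℂ) :
    fderiv ℂ Φ' (Φ P) (fderiv ℂ Φ P v) = v := by
  have hcomp := HasFDerivAt.comp P (h.symm.differentiableAt (h.mapsTo hP)).hasFDerivAt
    (h.differentiableAt hP).hasFDerivAt
  have hid : (Φ' ∘ Φ) =ᶠ[𝓝 P] id :=
    (eventually_fst_mem_typeIDomain hP).mono fun x hx => h.left_inv x hx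
  exact DFunLike.congr_fun (hcomp.unique ((hasFDerivAt_id P).congr_of_eventuallyEq hid)) v

lemma tendsto_symm (h : IsBundleAut Φ Φ') (hP : P.1 ∈ typeIDomain p q) :
    Tendsto Φ' (𝓝 (Φ P)) (𝓝 P) := by
  simpa only [ContinuousAt, h.left_inv P hP] using
    (h.symm.differentiableAt (h.mapsTo hP)).continuousAt

lemma preservesAt (h : IsBundleAut Φ Φ') (h₂ : IsBundleAut Φ₂ Φ₂') (hF : PreservesAt F m) :
    PreservesAt (Φ₂ ∘ F ∘ Φ') (Φ m) := by
  have hlim := h.tendsto_symm hF.mem.1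
  refine ⟨h.mapsTo_logBundle hF.mem, ?_, ?_⟩
  · filter_upwards [hlim.eventually hF.diff, hlim.eventually hF.eventually_fst_apply_mem,
      eventually_fst_mem_typeIDomain (h.mapsTo hF.mem.1)] with x hFx hFmem hx
    exact (h₂.differentiableAt hFmem).comp x (hFx.comp x (h.symm.differentiableAt hx))
  · filter_upwards [hlim.eventually hF.maps] with x hFx hx
    exact h₂.mapsTo_logBundle (hFx (h.symm.mapsTo_logBundle hx))

lemma fderiv_comp (h : IsBundleAut Φ Φ') (h₂ : IsBundleAut Φ₂ Φ₂') (hF : PreservesAt F m)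
    (v : CMat p q × ℂ) : fderiv ℂ (Φ₂ ∘ F ∘ Φ') (Φ m) (fderiv ℂ Φ m v) =
      fderiv ℂ Φ₂ (F m) (fderiv ℂ F m v) := by
  have hm : Φ' (Φ m) = m := h.left_inv m hF.mem.1
  have hF' : DifferentiableAt ℂ F (Φ' (Φ m)) := by
    rw [hm]
    exact hF.diff.self_of_nhds
  have hΦ₂ : DifferentiableAt ℂ Φ₂ (F (Φ' (Φ m))) := by
    rw [hm]
    exact h₂.differentiableAt hF.apply_mem.1
  have hΦ' := h.symm.differentiableAt (h.mapsTo hF.mem.1)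
  rw [(HasFDerivAt.comp (Φ m) hΦ₂.hasFDerivAt
    (HasFDerivAt.comp (Φ m) hF'.hasFDerivAt hΦ'.hasFDerivAt)).fderiv,
    ContinuousLinearMap.comp_apply, ContinuousLinearMap.comp_apply, h.fderiv_fderiv hF.mem.1, hm]

end IsBundleAut

/-- The derivative of the polarized generic norm in the first variable. -/
def dPolNorm (Z Y X : CMat p q) : ℂ :=
  fderiv ℂ (fun x : CMat p q × CMat p q => polNorm x.1 x.2) (Z, Y) (X, 0)

lemma fderiv_polNorm_left (Z Y X : CMat p q) :
    fderiv ℂ (fun Z => polNorm Z Y) Z X = dPolNorm Z Y X := by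
  have hpair := (differentiable_polNorm (p := p) (q := q) (Z, Y)).hasFDerivAt
  have hcomp := HasFDerivAt.comp Z (f := fun Z => (Z, Y)) hpair
    ((hasFDerivAt_id Z).prodMk (hasFDerivAt_const Y Z))
  exact DFunLike.congr_fun hcomp.fderiv X

lemma differentiable_dPolNorm (X : CMat p q) :
    Differentiable ℂ fun x : CMat p q × CMat p q => dPolNorm x.1 x.2 X := fun _ =>
  differentiableAt_fderiv_apply (.of_forall differentiable_polNorm) _

lemma dPolNorm_add_eq_zero_of_exp_mul_polNorm {Z Y : CMat p q} {H : CMat p q → ℂ} {c : ℂ}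
    (hH : DifferentiableAt ℂ H Z) (hc : ∀ᶠ W in 𝓝 Z, cexp (H W) * polNorm W Y = c)
    (X : CMat p q) : dPolNorm Z Y X + polNorm Z Y * fderiv ℂ H Z X = 0 := by
  have hmul := hH.hasFDerivAt.cexp.mul (differentiable_polNorm_left Y Z).hasFDerivAt
  have hconst : HasFDerivAt (fun _ : CMat p q => c) (0 : CMat p q →L[ℂ] ℂ) Z :=
    hasFDerivAt_const _ _
  have hX := DFunLike.congr_fun (hmul.unique (hconst.congr_of_eventuallyEq hc)) X
  simp only [_root_.add_apply, _root_.smul_apply, smul_eq_mul, _root_.zero_apply,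
    fderiv_polNorm_left] at hX
  refine (mul_eq_zero.1 (?_ : cexp (H Z) * _ = 0)).resolve_left (Complex.exp_ne_zero _)
  linear_combination hX

/-- A holomorphic parametrization of the complexified complex tangent space of the hypersurface
`2 Re ω = log N(Z)`: for `Y = star Z` these are the complex tangent vectors at `(Z, ω)`. -/
def crTangent (Z Y X : CMat p q) : CMat p q × ℂ := (polNorm Z Y • X, dPolNorm Z Y X)

lemma crTangent_zero_left (Y X : CMat p q) : crTangent 0 Y X = (X, -traceForm X Y) := by
  rw [crTangent, polNorm_zero_left, one_smul, ← fderiv_polNorm_left,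
    (hasFDerivAt_polNorm_left Y).fderiv]
  rfl

lemma crTangent_zero_right (Z X : CMat p q) : crTangent Z 0 X = (X, 0) := by
  have hone : (fun Z : CMat p q => polNorm Z 0) = fun _ => 1 := by
    funext Z
    rw [polNorm_comm, polNorm_zero_left]
  rw [crTangent, polNorm_comm, polNorm_zero_left, one_smul, ← fderiv_polNorm_left, hone]
  simp

lemma exists_isBundleAut_apply_eq_zero (hm : m ∈ logBundle p q) :
    ∃ Φ Φ', IsBundleAut (p := p) (q := q) Φ Φ' ∧ Φ m = 0 ∧
      ∀ X, (fderiv ℂ Φ m (crTangent m.1 (star m.1) X)).2 = 0 := by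
  obtain ⟨ψ, H, hψ, hbase, hfibre, c, hc⟩ := exists_isFibAut_apply_eq_zero hm
  obtain ⟨ψ', H', hψ', hleft, hright⟩ := hψ.exists_symm
  refine ⟨fibMap ψ H, fibMap ψ' H', ⟨⟨ψ, H, hψ, rfl⟩, ⟨ψ', H', hψ', rfl⟩, fun P hP => ?_,
    fun P hP => ?_⟩, Prod.ext hbase hfibre, fun X => ?_⟩
  · rw [fibMap, fibMap, (hleft P.1 hP).1, add_assoc, (hleft P.1 hP).2, add_zero]
  · rw [fibMap, fibMap, (hright P.1 hP).1, add_assoc, (hright P.1 hP).2, add_zero]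
  · have hΩ := isOpen_typeIDomain.mem_nhds hm.1
    rw [(hψ.hasFDerivAt_fibMap hm.1).fderiv]
    simpa [crTangent] using dPolNorm_add_eq_zero_of_exp_mul_polNorm (hψ.2.1.differentiableAt hΩ)
      (eventually_of_mem hΩ hc) X

/-- The derivative of `F` vanishes on the complex tangent space of the hypersurface at `m`. -/
def VanishesAt (F : CMat p q × ℂ → CMat p q × ℂ) (m : CMat p q × ℂ) : Prop :=
  ∀ X, fderiv ℂ F m (crTangent m.1 (star m.1) X) = 0

/-- Fibred automorphisms `Φ` and `Φ₂` that move the point `m` and its image `F m` to the origin,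
so that the normalized map `Φ₂ ∘ F ∘ Φ'` fixes the origin. -/
structure IsNormalization (F : CMat p q × ℂ → CMat p q × ℂ) (m : CMat p q × ℂ)
    (Φ Φ' Φ₂ Φ₂' : CMat p q × ℂ → CMat p q × ℂ) : Prop where
  source : IsBundleAut Φ Φ'
  target : IsBundleAut Φ₂ Φ₂'
  map_source : Φ m = 0
  map_target : Φ₂ (F m) = 0
  fderiv_crTangent : ∀ X, (fderiv ℂ Φ m (crTangent m.1 (star m.1) X)).2 = 0

lemma PreservesAt.exists_isNormalization (h : PreservesAt F m) :
    ∃ Φ Φ' Φ₂ Φ₂', IsNormalization F m Φ Φ' Φ₂ Φ₂' := by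
  obtain ⟨Φ, Φ', hΦ, hm, hX⟩ := exists_isBundleAut_apply_eq_zero h.mem
  obtain ⟨Φ₂, Φ₂', hΦ₂, hm₂, -⟩ := exists_isBundleAut_apply_eq_zero h.apply_mem
  exact ⟨Φ, Φ', Φ₂, Φ₂', hΦ, hΦ₂, hm, hm₂, hX⟩

namespace IsNormalization

variable {Φ Φ' Φ₂ Φ₂' : CMat p q × ℂ → CMat p q × ℂ}

lemma symm_zero (h : IsNormalization F m Φ Φ' Φ₂ Φ₂') (hm : m.1 ∈ typeIDomain p q) :
    Φ' 0 = m := by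
  rw [← h.map_source, h.source.left_inv m hm]

lemma map_zero (h : IsNormalization F m Φ Φ' Φ₂ Φ₂') (hm : m.1 ∈ typeIDomain p q) :
    (Φ₂ ∘ F ∘ Φ') 0 = 0 := by
  rw [Function.comp_apply, Function.comp_apply, h.symm_zero hm, h.map_target]

lemma preservesAt (h : IsNormalization F m Φ Φ' Φ₂ Φ₂') (hF : PreservesAt F m) :
    PreservesAt (Φ₂ ∘ F ∘ Φ') 0 := by
  rw [← h.map_source]
  exact h.source.preservesAt h.target hF

lemma fderiv_fderiv (h : IsNormalization F m Φ Φ' Φ₂ Φ₂') (hF : PreservesAt F m)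
    (v : CMat p q × ℂ) :
    fderiv ℂ Φ₂' 0 (fderiv ℂ (Φ₂ ∘ F ∘ Φ') 0 (fderiv ℂ Φ m v)) = fderiv ℂ F m v := by
  rw [← h.map_source, h.source.fderiv_comp h.target hF, h.map_source, ← h.map_target,
    h.target.fderiv_fderiv hF.apply_mem.1]

lemma vanishesAt (h : IsNormalization F m Φ Φ' Φ₂ Φ₂') (hF : PreservesAt F m)
    (hzero : ∀ X, fderiv ℂ (Φ₂ ∘ F ∘ Φ') 0 (X, 0) = 0) : VanishesAt F m := fun X => by
  have hX : fderiv ℂ Φ m (crTangent m.1 (star m.1) X) = (_, 0) :=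
    Prod.ext rfl (h.fderiv_crTangent X)
  rw [← h.fderiv_fderiv hF, hX, hzero, _root_.map_zero]

lemma fderiv_fst_eq_zero (h : IsNormalization F m Φ Φ' Φ₂ Φ₂') (hF : PreservesAt F m)
    (hzero : vertPart (Φ₂ ∘ F ∘ Φ') = 0) : (fderiv ℂ F m (0, 1)).1 = 0 := by
  have hvert : fderiv ℂ (Φ₂ ∘ F ∘ Φ') 0 (0, 1) = (0, scalPart (Φ₂ ∘ F ∘ Φ')) :=
    Prod.ext hzero rfl
  rw [← h.fderiv_fderiv hF, h.source.fderiv_zero_left hF.mem.1, hvert,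
    h.target.symm.fderiv_zero_left (P := 0) zero_mem_typeIDomain]

end IsNormalization

lemma PreservesAt.vanishesAt_or (h : PreservesAt F m) (hp : 2 ≤ p) (hq : 2 ≤ q) :
    VanishesAt F m ∨ (fderiv ℂ F m (0, 1)).1 = 0 := by
  obtain ⟨Φ, Φ', Φ₂, Φ₂', hΦ⟩ := h.exists_isNormalization
  exact ((hΦ.preservesAt h).fderiv_eq_zero_or (hΦ.map_zero h.mem.1) hp hq).imp
    (hΦ.vanishesAt h) fun hvert => hΦ.fderiv_fst_eq_zero h hvert.2

end Dichotomy

section Nondegenerate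

variable {p q : ℕ} {F : CMat p q × ℂ → CMat p q × ℂ}

lemma tendsto_fst_snd_fst :
    Tendsto (fun x : CMat p q × ℂ × CMat p q => (x.1, x.2.1)) (𝓝 0) (𝓝 0) :=
  (by fun_prop : Continuous fun x : CMat p q × ℂ × CMat p q => (x.1, x.2.1)).tendsto' 0 0 rfl

lemma tendsto_fst_snd_zero :
    Tendsto (fun P : CMat p q × ℂ => (P.1, P.2, (0 : CMat p q))) (𝓝 0) (𝓝 0) :=
  (by fun_prop : Continuous fun P : CMat p q × ℂ => (P.1, P.2, (0 : CMat p q))).tendsto' 0 0 rfl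

lemma tendsto_fst_snd_star :
    Tendsto (fun P : CMat p q × ℂ => (P.1, P.2, star P.1)) (𝓝 0) (𝓝 0) :=
  (by fun_prop : Continuous fun P : CMat p q × ℂ => (P.1, P.2, star P.1)).tendsto' 0 0 (by simp)

lemma eventually_differentiableAt_fderiv_apply (hF : ∀ᶠ P in 𝓝 0, DifferentiableAt ℂ F P)
    (v : CMat p q × ℂ) : ∀ᶠ x in 𝓝 (0 : CMat p q × ℂ × CMat p q),
      DifferentiableAt ℂ (fun x : CMat p q × ℂ × CMat p q => fderiv ℂ F (x.1, x.2.1) v) x := by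
  filter_upwards [tendsto_fst_snd_fst.eventually hF.eventually_nhds] with x hx
  exact DifferentiableAt.comp x (g := fun P => fderiv ℂ F P v)
    (f := fun x : CMat p q × ℂ × CMat p q => (x.1, x.2.1)) (differentiableAt_fderiv_apply hx v)
    (by fun_prop)

lemma eventually_differentiableAt_fderiv_crTangent (hF : ∀ᶠ P in 𝓝 0, DifferentiableAt ℂ F P)
    (X : CMat p q) : ∀ᶠ x in 𝓝 (0 : CMat p q × ℂ × CMat p q),
      DifferentiableAt ℂ (fun x : CMat p q × ℂ × CMat p q =>
        fderiv ℂ F (x.1, x.2.1) (crTangent x.1 x.2.2 X)) x := by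
  have hsplit : (fun x : CMat p q × ℂ × CMat p q =>
      fderiv ℂ F (x.1, x.2.1) (crTangent x.1 x.2.2 X)) = fun x =>
        polNorm x.1 x.2.2 • fderiv ℂ F (x.1, x.2.1) (X, 0) +
          dPolNorm x.1 x.2.2 X • fderiv ℂ F (x.1, x.2.1) (0, 1) := by
    funext x
    rw [← map_smul, ← map_smul, ← map_add]
    simp [crTangent]
  have hpolNorm : Differentiable ℂ fun x : CMat p q × ℂ × CMat p q => polNorm x.1 x.2.2 :=
    Differentiable.comp (g := fun x : CMat p q × CMat p q => polNorm x.1 x.2)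
      (f := fun x : CMat p q × ℂ × CMat p q => (x.1, x.2.2)) differentiable_polNorm
      (by fun_prop)
  have hdPolNorm : Differentiable ℂ fun x : CMat p q × ℂ × CMat p q => dPolNorm x.1 x.2.2 X :=
    Differentiable.comp (g := fun x : CMat p q × CMat p q => dPolNorm x.1 x.2 X)
      (f := fun x : CMat p q × ℂ × CMat p q => (x.1, x.2.2)) (differentiable_dPolNorm X)
      (by fun_prop)
  rw [hsplit]
  filter_upwards [eventually_differentiableAt_fderiv_apply hF (X, 0),
    eventually_differentiableAt_fderiv_apply hF (0, 1)] with x hbase hfibre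
  exact ((hpolNorm x).fun_smul hbase).fun_add ((hdPolNorm x).fun_smul hfibre)

lemma PreservesAt.eventually_fderiv_crTangent_eq_zero (h : PreservesAt F 0)
    (hF : ∀ᶠ m in 𝓝 0, m ∈ logBundle p q → VanishesAt F m) (X : CMat p q) :
    ∀ᶠ x in 𝓝 (0 : CMat p q × ℂ × CMat p q),
      fderiv ℂ F (x.1, x.2.1) (crTangent x.1 x.2.2 X) = 0 :=
  eventually_eq_zero_of_logBundle (eventually_differentiableAt_fderiv_crTangent h.diff X)
    (hF.mono fun _ hm hmem => hm hmem X)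

lemma eventually_fderiv_base_eq_zero {X : CMat p q}
    (hX : ∀ᶠ x in 𝓝 (0 : CMat p q × ℂ × CMat p q),
      fderiv ℂ F (x.1, x.2.1) (crTangent x.1 x.2.2 X) = 0) :
    ∀ᶠ P in 𝓝 (0 : CMat p q × ℂ), fderiv ℂ F P (X, 0) = 0 := by
  filter_upwards [tendsto_fst_snd_zero.eventually hX] with P hP
  rwa [crTangent_zero_right] at hP

lemma eventually_fderiv_fibre_eq_zero {X : CMat p q} (hX0 : X ≠ 0)
    (hX : ∀ᶠ x in 𝓝 (0 : CMat p q × ℂ × CMat p q),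
      fderiv ℂ F (x.1, x.2.1) (crTangent x.1 x.2.2 X) = 0) :
    ∀ᶠ P in 𝓝 (0 : CMat p q × ℂ), fderiv ℂ F P (0, 1) = 0 := by
  have hlim : Tendsto (fun x : CMat p q × (CMat p q × ℂ) => (x.2.1, x.2.2, x.1)) (𝓝 0) (𝓝 0) :=
    (by fun_prop : Continuous fun x : CMat p q × (CMat p q × ℂ) =>
      (x.2.1, x.2.2, x.1)).tendsto' 0 0 rfl
  obtain ⟨ε, hε0, hε⟩ := exists_ne_zero_smul_of_eventually (star X) (hlim.eventually hX).curry_nhds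
  have hcont : Continuous fun P : CMat p q × ℂ => dPolNorm P.1 (ε • star X) X :=
    (differentiable_dPolNorm X).continuous.comp
      (by fun_prop : Continuous fun P : CMat p q × ℂ => (P.1, ε • star X))
  have hne : dPolNorm (0 : CMat p q × ℂ).1 (ε • star X) X ≠ 0 := by
    have hsnd := congrArg Prod.snd (crTangent_zero_left (ε • star X) X)
    rw [Prod.fst_zero, show dPolNorm 0 (ε • star X) X = _ from hsnd, neg_ne_zero, map_smul]
    exact mul_ne_zero hε0 fun htrace => hX0 (traceForm_star_self_eq_zero htrace)
  filter_upwards [hε, hcont.continuousAt.eventually_ne hne, eventually_fderiv_base_eq_zero hX]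
    with P hcr hdPol hbase
  have hsplit : crTangent P.1 (ε • star X) X = polNorm P.1 (ε • star X) • (X, (0 : ℂ)) +
      dPolNorm P.1 (ε • star X) X • ((0 : CMat p q), (1 : ℂ)) := by simp [crTangent]
  rw [hsplit, map_add, map_smul, map_smul, hbase, smul_zero, zero_add] at hcr
  exact (smul_eq_zero.1 hcr).resolve_left hdPol

lemma fderiv_eq_zero_of_single {P : CMat p q × ℂ}
    (hbase : ∀ k l, fderiv ℂ F P (Pi.single k (Pi.single l 1), 0) = 0)
    (hfibre : fderiv ℂ F P (0, 1) = 0) : fderiv ℂ F P = 0 := by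
  have hinl : ((fderiv ℂ F P).comp (.inl ℂ (CMat p q) ℂ) :
      CMat p q →ₗ[ℂ] CMat p q × ℂ) = 0 :=
    LinearMap.pi_ext' fun k => LinearMap.pi_ext' fun l => LinearMap.ext_ring <| by
      simpa using hbase k l
  refine ContinuousLinearMap.prod_ext (ContinuousLinearMap.coe_injective hinl)
    (ContinuousLinearMap.ext_ring ?_)
  simpa using hfibre

lemma PreservesAt.frequently_not_vanishesAt (h : PreservesAt F 0) (i : Fin p) (j : Fin q)
    (hF : ¬ ∀ᶠ P in 𝓝 0, F P = F 0) :
    ∃ᶠ m in 𝓝 0, m ∈ logBundle p q ∧ ¬ VanishesAt F m := by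
  intro hvanish
  have hcr := h.eventually_fderiv_crTangent_eq_zero
    (hvanish.mono fun m hm hmem => by_contra fun hm' => hm ⟨hmem, hm'⟩)
  have hbase : ∀ᶠ P in 𝓝 (0 : CMat p q × ℂ), ∀ k l,
      fderiv ℂ F P (Pi.single k (Pi.single l 1), 0) = 0 :=
    eventually_all.2 fun k => eventually_all.2 fun l => eventually_fderiv_base_eq_zero (hcr _)
  have hfibre := eventually_fderiv_fibre_eq_zero
    (fun h0 => one_ne_zero (α := ℂ) (by simpa using congrFun₂ h0 i j))
    (hcr (Pi.single i (Pi.single j 1)))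
  refine hF (eventually_eq_of_eventually_hasFDerivAt_zero ?_)
  filter_upwards [h.diff, hbase, hfibre] with P hP hP₁ hP₂
  simpa only [fderiv_eq_zero_of_single hP₁ hP₂] using hP.hasFDerivAt

lemma PreservesAt.eventually_fderiv_fst_eq_zero (h : PreservesAt F 0) (hp : 2 ≤ p) (hq : 2 ≤ q)
    {X : CMat p q} (hX : fderiv ℂ F 0 (X, 0) ≠ 0) :
    ∀ᶠ P in 𝓝 (0 : CMat p q × ℂ), (fderiv ℂ F P (0, 1)).1 = 0 := by
  have hcont := (eventually_differentiableAt_fderiv_crTangent h.diff X).self_of_nhds.continuousAt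
  have hne : fderiv ℂ F ((0 : CMat p q × ℂ × CMat p q).1, (0 : CMat p q × ℂ × CMat p q).2.1)
      (crTangent (0 : CMat p q × ℂ × CMat p q).1 (0 : CMat p q × ℂ × CMat p q).2.2 X) ≠ 0 := by
    rwa [Prod.snd_zero, Prod.snd_zero, crTangent_zero_right]
  refine tendsto_fst_snd_zero.eventually (eventually_eq_zero_of_logBundle
    (K := fun x => (fderiv ℂ F (x.1, x.2.1) (0, 1)).1)
    ((eventually_differentiableAt_fderiv_apply h.diff (0, 1)).mono fun _ hx => hx.fst) ?_)
  filter_upwards [tendsto_fst_snd_star.eventually (hcont.eventually_ne hne), h.eventually]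
    with P hP hpres hmem
  exact ((hpres hmem).vanishesAt_or hp hq).resolve_left fun hv => hP (hv X)

end Nondegenerate

section LinearModel

lemma eq_natDegree_of_mul_derivative_eq {R : Type*} [CommRing R] [IsDomain R] {c ε : R}
    {Q : Polynomial R} (hε : ε ≠ 0) (hQ : Q ≠ 0)
    (h : (1 - Polynomial.C ε * Polynomial.X) * Q.derivative = Polynomial.C (-(c * ε)) * Q) :
    c = Q.natDegree := by
  have hcoeff := congrArg (fun P => Polynomial.coeff P Q.natDegree) h
  have hlead : Q.coeff Q.natDegree ≠ 0 := by simpa using hQ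
  have hnext : Q.coeff (Q.natDegree + 1) = 0 :=
    Polynomial.coeff_eq_zero_of_natDegree_lt (Nat.lt_succ_self _)
  have hX : (Polynomial.X * Q.derivative).coeff Q.natDegree =
      Q.coeff Q.natDegree * Q.natDegree := by
    cases hn : Q.natDegree with
    | zero => simp
    | succ k => rw [Polynomial.coeff_X_mul, Polynomial.coeff_derivative, Nat.cast_succ]
  simp only [sub_mul, one_mul, mul_assoc, Polynomial.coeff_sub, Polynomial.coeff_C_mul, hX,
    Polynomial.coeff_derivative, hnext] at hcoeff
  have hmul : (c - Q.natDegree) * (ε * Q.coeff Q.natDegree) = 0 := by linear_combination hcoeff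
  exact sub_eq_zero.1 ((mul_eq_zero.1 hmul).resolve_right (mul_ne_zero hε hlead))

lemma exists_nat_eq_of_exp_log_eq_eval {c ε : ℂ} (hε : ε ≠ 0) {Q : Polynomial ℂ}
    (h : ∀ᶠ t in 𝓝 (0 : ℂ), cexp (c * log (1 - ε * t)) = Q.eval t) : ∃ n : ℕ, c = n := by
  have hcont : Continuous fun t : ℂ => 1 - ε * t := by fun_prop
  have hslit : ∀ᶠ t in 𝓝 (0 : ℂ), 1 - ε * t ∈ slitPlane :=
    (hcont.tendsto' 0 1 (by simp)).eventually (isOpen_slitPlane.mem_nhds one_mem_slitPlane)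
  have hQ : Q ≠ 0 := by
    rintro rfl
    simpa using h.self_of_nhds
  have hode : ∀ᶠ t in 𝓝 (0 : ℂ), ((1 - Polynomial.C ε * Polynomial.X) * Q.derivative).eval t =
      (Polynomial.C (-(c * ε)) * Q).eval t := by
    filter_upwards [h.eventually_nhds, hslit] with t ht hs
    have hlin : HasDerivAt (fun t : ℂ => 1 - ε * t) (-ε) t := by
      simpa using ((hasDerivAt_id t).const_mul ε).const_sub 1
    have hderiv := (((hlin.clog hs).const_mul c).cexp.congr_of_eventuallyEq
      (EventuallyEq.symm ht)).unique (Q.hasDerivAt t)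
    have hne : 1 - ε * t ≠ 0 := slitPlane_ne_zero hs
    rw [ht.self_of_nhds] at hderiv
    simp only [Polynomial.eval_mul, Polynomial.eval_sub, Polynomial.eval_one, Polynomial.eval_C,
      Polynomial.eval_X]
    rw [← hderiv]
    field_simp
  exact ⟨Q.natDegree, eq_natDegree_of_mul_derivative_eq hε hQ
    (Polynomial.eq_of_infinite_eval_eq _ _ (infinite_of_mem_nhds (0 : ℂ) hode))⟩

variable {p q : ℕ} {A A' : CMat p q ≃L[ℂ] CMat p q} {c : ℂ}

open scoped Matrix.Norms.L2Operator in
lemma mem_typeIDomain_of_forall_genNormI_ne_zero {Z : CMat p q}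
    (h : ∀ s ∈ Icc (0 : ℝ) 1, genNormI ((s : ℂ) • Z) ≠ 0) : Z ∈ typeIDomain p q := by
  refine mem_typeIDomain_iff.2 (norm_lt_one_of_forall_det_ne_zero fun s hs hdet => h s hs ?_)
  rw [genNormI, ← smul_of, hdet, zero_re]

lemma isFibAut_of_genNormI_eq (h : ∀ Z, genNormI (A Z) = genNormI Z) :
    IsFibAut A (fun _ => 0) := by
  have hmaps : ∀ B : CMat p q ≃L[ℂ] CMat p q, (∀ Z, genNormI (B Z) = genNormI Z) →
      MapsTo B (typeIDomain p q) (typeIDomain p q) := fun B hB Z hZ => by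
    refine mem_typeIDomain_of_forall_genNormI_ne_zero fun s hs => ?_
    have hsZ := convex_typeIDomain.smul_mem_of_zero_mem zero_mem_typeIDomain hZ hs
    rw [← map_smul, hB, Complex.coe_smul]
    exact (genNormI_pos hsZ).ne'
  refine ⟨⟨A.differentiable.differentiableOn, hmaps A h, A.symm,
    A.symm.differentiable.differentiableOn, hmaps A.symm fun Z => ?_,
    fun Z _ => A.symm_apply_apply Z, fun Z _ => A.apply_symm_apply Z⟩,
    differentiableOn_const _, fun Z _ => ?_⟩
  · rw [← h, A.apply_symm_apply]
  · simp [h]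

lemma polNorm_smul_single (i : Fin p) (j : Fin q) (a b : ℂ) :
    polNorm (a • Pi.single i (Pi.single j 1) : CMat p q) (b • Pi.single i (Pi.single j 1)) =
      1 - a * b := by
  have hof : Matrix.of (Pi.single i (Pi.single j 1) : CMat p q) = Matrix.single i j 1 :=
    (single_eq_of_single_single i j 1).symm
  have hdiag : (Matrix.single i i 1 : Matrix (Fin p) (Fin p) ℂ) =
      Matrix.diagonal (Pi.single i 1) := by
    ext k l
    simp only [Matrix.single_apply, Matrix.diagonal_apply, Pi.single_apply]
    grind
  rw [polNorm_smul_left, polNorm, ← smul_of, ← smul_of, hof, smul_smul, transpose_smul,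
    transpose_single, Matrix.mul_smul, single_mul_single_same, mul_one, hdiag,
    ← Matrix.diagonal_smul, ← Matrix.diagonal_one, Matrix.diagonal_sub, det_diagonal,
    Fintype.prod_eq_single i fun k hk => by simp [hk]]
  simp

lemma exists_nat_eq_of_polNorm_pow (i : Fin p) (j : Fin q) {B B' : CMat p q →L[ℂ] CMat p q}
    (h : ∀ᶠ x in 𝓝 (0 : CMat p q × CMat p q),
      cexp (c * polLog x.1 x.2) = polNorm (B x.1) (B' x.2)) : ∃ n : ℕ, c = n := by
  set E : CMat p q := Pi.single i (Pi.single j 1)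
  have hswap : ∀ᶠ x in 𝓝 (0 : CMat p q × CMat p q),
      cexp (c * polLog x.2 x.1) = polNorm (B x.2) (B' x.1) :=
    (continuous_swap.tendsto' 0 0 rfl).eventually h
  obtain ⟨ε, hε, hline⟩ := exists_ne_zero_smul_of_eventually E hswap.curry_nhds
  obtain ⟨P, hP⟩ := exists_polNorm_smul_eq (B E) (B' (ε • E))
  refine exists_nat_eq_of_exp_log_eq_eval (c := c) hε (Q := 1 -
    Polynomial.X * Polynomial.C (traceForm (B E) (B' (ε • E))) + Polynomial.X ^ 2 * P) ?_
  filter_upwards [(tendsto_smul_zero E).eventually hline] with t ht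
  rw [polLog, polNorm_smul_single, map_smul, hP] at ht
  rw [mul_comm ε, ht]
  simp

lemma eventually_abs_im_lt_pi : ∀ᶠ z in 𝓝 (0 : ℂ), |z.im| < Real.pi := by
  have hcont : Continuous fun z : ℂ => |z.im| := by fun_prop
  exact (hcont.tendsto' 0 0 (by simp)).eventually (gt_mem_nhds Real.pi_pos)

lemma eventually_polNorm_symm (hc : c ≠ 0)
    (h : ∀ᶠ x in 𝓝 (0 : CMat p q × CMat p q),
      cexp (c * polLog x.1 x.2) = polNorm (A x.1) (A' x.2)) :
    ∀ᶠ x in 𝓝 (0 : CMat p q × CMat p q),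
      cexp (c⁻¹ * polLog x.1 x.2) = polNorm (A.symm x.1) (A'.symm x.2) := by
  have hfst : Tendsto (fun x : CMat p q × CMat p q => A.symm x.1) (𝓝 0) (𝓝 0) :=
    (A.symm.continuous.comp continuous_fst).tendsto' _ _ (map_zero A.symm)
  have hsnd : Tendsto (fun x : CMat p q × CMat p q => A'.symm x.2) (𝓝 0) (𝓝 0) :=
    (A'.symm.continuous.comp continuous_snd).tendsto' _ _ (map_zero A'.symm)
  have hpair : Tendsto (fun x : CMat p q × CMat p q => (A.symm x.1, A'.symm x.2)) (𝓝 0) (𝓝 0) :=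
    hfst.prodMk_nhds hsnd
  have hlog := (tendsto_polLog hfst hsnd).const_mul c
  rw [mul_zero] at hlog
  filter_upwards [hpair.eventually h, hlog.eventually eventually_abs_im_lt_pi,
    hpair.eventually eventually_polNorm_mem_slitPlane] with x hx him hslit
  simp only [ContinuousLinearEquiv.apply_symm_apply] at hx
  have hmul : polLog x.1 x.2 = c * polLog (A.symm x.1) (A'.symm x.2) := by
    rw [polLog, ← hx, log_exp (abs_lt.1 him).1 (abs_lt.1 him).2.le]
  rw [hmul, inv_mul_cancel_left₀ hc, polLog, exp_log (slitPlane_ne_zero hslit)]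

lemma eq_one_of_polNorm_pow (i : Fin p) (j : Fin q) (hc : c ≠ 0)
    (h : ∀ᶠ x in 𝓝 (0 : CMat p q × CMat p q),
      cexp (c * polLog x.1 x.2) = polNorm (A x.1) (A' x.2)) : c = 1 := by
  obtain ⟨n, hn⟩ := exists_nat_eq_of_polNorm_pow i j (B := A) (B' := A') h
  obtain ⟨m, hm⟩ := exists_nat_eq_of_polNorm_pow i j (B := A.symm) (B' := A'.symm)
    (eventually_polNorm_symm hc h)
  have hnm : n * m = 1 := by
    rw [← Nat.cast_inj (R := ℂ), Nat.cast_mul, ← hn, ← hm, mul_inv_cancel₀ hc, Nat.cast_one]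
  rw [hn, Nat.eq_one_of_mul_eq_one_right hnm, Nat.cast_one]

lemma differentiable_polNorm_map_map (B B' : CMat p q →L[ℂ] CMat p q) :
    Differentiable ℂ fun x : CMat p q × CMat p q => polNorm (B x.1) (B' x.2) := by
  have hcomp := Differentiable.comp (g := fun x : CMat p q × CMat p q => polNorm x.1 x.2)
    (f := fun x : CMat p q × CMat p q => (B x.1, B' x.2)) differentiable_polNorm (by fun_prop)
  exact hcomp

lemma polNorm_map_map_of_polNorm_pow (i : Fin p) (j : Fin q) (hc : c ≠ 0)
    (h : ∀ᶠ x in 𝓝 (0 : CMat p q × CMat p q),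
      cexp (c * polLog x.1 x.2) = polNorm (A x.1) (A' x.2)) (Z Y : CMat p q) :
    polNorm (A Z) (A' Y) = polNorm Z Y := by
  have hev : (fun x : CMat p q × CMat p q => polNorm (A x.1) (A' x.2)) =ᶠ[𝓝 0]
      fun x => polNorm x.1 x.2 := by
    filter_upwards [h, eventually_polNorm_mem_slitPlane] with x hx hslit
    rw [← hx, eq_one_of_polNorm_pow i j hc h, one_mul, polLog, exp_log (slitPlane_ne_zero hslit)]
  have hdiff := differentiable_polNorm_map_map (A : CMat p q →L[ℂ] CMat p q) A'
  have hEq := eqOn_of_preconnected_of_eventuallyEq isOpen_univ isPreconnected_univ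
    hdiff.differentiableOn differentiable_polNorm.differentiableOn (mem_univ 0) hev
  have hZY := hEq (mem_univ (Z, Y))
  exact hZY

end LinearModel

section LocalModel

variable {p q : ℕ} {F F' : CMat p q × ℂ → CMat p q × ℂ}

lemma eventually_fst_eq_of_fderiv_fst_eq_zero (hF : ∀ᶠ P in 𝓝 0, DifferentiableAt ℂ F P)
    (hvert : ∀ᶠ P in 𝓝 0, (fderiv ℂ F P (0, 1)).1 = 0) :
    ∀ᶠ P in 𝓝 0, (F P).1 = (F (P.1, 0)).1 := by
  refine eventually_eq_of_eventually_hasDerivAt_snd_zero (f := fun P => (F P).1) ?_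
  filter_upwards [hF, hvert] with P hP hzero
  have hfst : HasFDerivAt Prod.fst (ContinuousLinearMap.fst ℂ (CMat p q) ℂ) (F P) := hasFDerivAt_fst
  have hderiv := hfst.comp_hasDerivAt P.2 (f := fun w => F (P.1, w)) (hasDerivAt_prodMk hP)
  rwa [ContinuousLinearMap.coe_fst', hzero] at hderiv

lemma eventually_polLog_smul_single (i : Fin p) (j : Fin q) {ε : ℂ} (hε : ε ≠ 0) :
    ∀ᶠ y in 𝓝 (0 : ℂ), polLog (((1 - cexp (-y)) / ε) • Pi.single i (Pi.single j 1) : CMat p q)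
      (ε • Pi.single i (Pi.single j 1)) = -y := by
  filter_upwards [eventually_abs_im_lt_pi] with y hy
  have him := abs_lt.1 hy
  rw [polLog, polNorm_smul_single, div_mul_cancel₀ _ hε, sub_sub_cancel,
    log_exp (by rw [neg_im]; linarith) (by rw [neg_im]; linarith)]

namespace IsPolPair

lemma eventually_fst_eq_linPart (h : IsPolPair F F') (hp : 2 ≤ p) (hq : 2 ≤ q)
    (hγ : scalPart F ≠ 0) (hvert : ∀ᶠ P in 𝓝 0, (fderiv ℂ F P (0, 1)).1 = 0) :
    ∀ᶠ P in 𝓝 0, (F P).1 = linPart F P.1 := by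
  have hγ' : scalPart F' ≠ 0 := by rwa [← h.scalPart_eq ⟨0, by lia⟩ ⟨0, by lia⟩]
  have hlin := h.symm.eventually_fst_eq hγ' (U := 0)
    (by rw [_root_.map_zero, h.symm.vertPart_eq_zero hp hq hγ'])
  filter_upwards [eventually_fst_eq_of_fderiv_fst_eq_zero h.diff hvert,
    (continuous_fst.tendsto' (0 : CMat p q × ℂ) 0 rfl).eventually hlin] with P hP hbase
  simp [hP, hbase.2.1]

lemma eventually_snd_eq_neg (h : IsPolPair F F')
    (hF' : ∀ᶠ P in 𝓝 0, (F' P).1 = linPart F' P.1) :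
    ∀ᶠ P in 𝓝 0, (F P).2 = -(F' (0, -P.2)).2 := by
  have hneg : Tendsto (fun P : CMat p q × ℂ => ((0 : CMat p q), -P.2)) (𝓝 0) (𝓝 0) :=
    Continuous.tendsto' (by fun_prop) _ _ (by simp)
  filter_upwards [tendsto_fst_snd_zero.eventually h.eq, hneg.eventually hF'] with P hP hlin
  simp only [polConj, polLog_zero_right, zero_sub] at hP
  rw [hlin, _root_.map_zero, polLog_zero_right] at hP
  exact eq_neg_of_add_eq_zero_left hP

lemma eventually_snd_eq (h : IsPolPair F F') (hF' : ∀ᶠ P in 𝓝 0, (F' P).1 = linPart F' P.1) :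
    ∀ᶠ P in 𝓝 0, (F P).2 = (F (0, P.2)).2 := by
  have hproj : Tendsto (fun P : CMat p q × ℂ => ((0 : CMat p q), P.2)) (𝓝 0) (𝓝 0) :=
    Continuous.tendsto' (by fun_prop) _ _ rfl
  have hneg := h.eventually_snd_eq_neg hF'
  filter_upwards [hneg, hproj.eventually hneg] with P hP hP'
  rw [hP, hP']

lemma eventually_snd_sub_snd (h : IsPolPair F F')
    (hF : ∀ᶠ P in 𝓝 0, (F P).1 = linPart F P.1)
    (hF' : ∀ᶠ P in 𝓝 0, (F' P).1 = linPart F' P.1) :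
    ∀ᶠ x in 𝓝 (0 : CMat p q × ℂ × CMat p q),
      (F (0, x.2.1)).2 - (F (0, x.2.1 - polLog x.1 x.2.2)).2 =
        polLog (linPart F x.1) (linPart F' x.2.2) := by
  filter_upwards [h.eq, tendsto_fst_snd_fst.eventually (hF.and (h.eventually_snd_eq hF')),
    tendsto_polConj.eventually (hF'.and (h.symm.eventually_snd_eq_neg hF))]
    with x hx ⟨hbase, hfibre⟩ ⟨hbase', hfibre'⟩
  rw [hbase, hfibre, hbase', hfibre', polConj, neg_sub] at hx
  rw [← hx, sub_eq_add_neg]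

lemma eventually_snd_add (h : IsPolPair F F') (i : Fin p) (j : Fin q)
    (hF : ∀ᶠ P in 𝓝 0, (F P).1 = linPart F P.1)
    (hF' : ∀ᶠ P in 𝓝 0, (F' P).1 = linPart F' P.1) :
    ∀ᶠ x in 𝓝 (0 : ℂ × ℂ), (F (0, x.1 + x.2)).2 = (F (0, x.1)).2 + (F (0, x.2)).2 := by
  set E : CMat p q := Pi.single i (Pi.single j 1)
  have hperm : Tendsto (fun x : CMat p q × CMat p q × ℂ => (x.2.1, x.2.2, x.1)) (𝓝 0) (𝓝 0) :=
    Continuous.tendsto' (by fun_prop) _ _ rfl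
  obtain ⟨ε, hε, hline⟩ := exists_ne_zero_smul_of_eventually E
    (hperm.eventually (h.eventually_snd_sub_snd hF hF')).curry_nhds
  have hcurve : Tendsto (fun x : ℂ × ℂ => (((1 - cexp (-x.2)) / ε) • E, x.1)) (𝓝 0) (𝓝 0) :=
    Continuous.tendsto' (by fun_prop) _ _ (by simp)
  have hzero : Tendsto (fun x : ℂ × ℂ => ((0 : ℂ), x.2)) (𝓝 0) (𝓝 0) :=
    Continuous.tendsto' (by fun_prop) _ _ rfl
  have hlogE : ∀ᶠ y in 𝓝 (0 : ℂ), polLog (((1 - cexp (-y)) / ε) • E) (ε • E) = -y :=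
    eventually_polLog_smul_single i j hε
  filter_upwards [hcurve.eventually hline, (hcurve.comp hzero).eventually hline,
    (continuous_snd.tendsto' (0 : ℂ × ℂ) 0 rfl).eventually hlogE]
    with x hx hx₀ hlog
  simp only [Function.comp_apply, hlog, sub_neg_eq_add, zero_add] at hx hx₀
  have hF0 : (F (0, 0)).2 = 0 := congrArg Prod.snd h.map_zero
  linear_combination hx₀ - hx - hF0

lemma eventually_snd_eq_mul (h : IsPolPair F F') (i : Fin p) (j : Fin q)
    (hF : ∀ᶠ P in 𝓝 0, (F P).1 = linPart F P.1)
    (hF' : ∀ᶠ P in 𝓝 0, (F' P).1 = linPart F' P.1) :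
    ∀ᶠ P in 𝓝 0, (F P).2 = P.2 * scalPart F := by
  have hlin := eventually_eq_smul_of_additive
    (hasDerivAt_prodMk (x := (0 : CMat p q)) h.diff.self_of_nhds).snd
    (h.eventually_snd_add i j hF hF')
  filter_upwards [h.eventually_snd_eq hF',
    (continuous_snd.tendsto' (0 : CMat p q × ℂ) 0 rfl).eventually hlin] with P hP hsmul
  exact hP.trans hsmul

lemma exists_equiv_eq_linPart (h : IsPolPair F F') (hγ : scalPart F ≠ 0) :
    ∃ A : CMat p q ≃L[ℂ] CMat p q, ∀ X, A X = linPart F X :=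
  ⟨(LinearEquiv.ofBijective (linPart F : CMat p q →ₗ[ℂ] CMat p q)
    (h.linPart_bijective hγ)).toContinuousLinearEquiv, fun _ => rfl⟩

lemma eventually_exp_scalPart_mul_polLog (h : IsPolPair F F') (i : Fin p) (j : Fin q)
    (hF : ∀ᶠ P in 𝓝 0, (F P).1 = linPart F P.1)
    (hF' : ∀ᶠ P in 𝓝 0, (F' P).1 = linPart F' P.1) :
    ∀ᶠ x in 𝓝 (0 : CMat p q × CMat p q),
      cexp (scalPart F * polLog x.1 x.2) = polNorm (linPart F x.1) (linPart F' x.2) := by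
  have hfst : Tendsto (fun x : CMat p q × CMat p q => x.1) (𝓝 0) (𝓝 0) :=
    continuous_fst.tendsto' _ _ rfl
  have hsnd : Tendsto (fun x : CMat p q × CMat p q => x.2) (𝓝 0) (𝓝 0) :=
    continuous_snd.tendsto' _ _ rfl
  have hgraph : Tendsto (fun x : CMat p q × CMat p q => (x.1, polLog x.1 x.2)) (𝓝 0) (𝓝 0) :=
    hfst.prodMk_nhds (tendsto_polLog hfst hsnd)
  have hslice : Tendsto (fun x : CMat p q × CMat p q => (x.2, (0 : ℂ))) (𝓝 0) (𝓝 0) :=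
    hsnd.prodMk_nhds tendsto_const_nhds
  filter_upwards [h.eventually_exp_snd,
    hgraph.eventually (hF.and (h.eventually_snd_eq_mul i j hF hF')), hslice.eventually hF']
    with x hx ⟨hbase, hfibre⟩ hbase'
  rwa [hbase, hfibre, hbase', mul_comm] at hx

end IsPolPair

lemma eventually_starMap_fst_eq_linPart (hdiff : DifferentiableAt ℂ F 0)
    (hF : ∀ᶠ P in 𝓝 0, (F P).1 = linPart F P.1) :
    ∀ᶠ P in 𝓝 0, (starMap F P).1 = linPart (starMap F) P.1 := by
  filter_upwards [tendsto_star_zero.eventually hF] with P hP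
  have hlin := linPart_starMap hdiff (star P.1)
  rw [star_star] at hlin
  exact (congrArg star hP).trans hlin.symm

lemma PreservesAt.exists_isFibAut_eventuallyEq_fibMap (h : PreservesAt F 0) (h0 : F 0 = 0)
    (hp : 2 ≤ p) (hq : 2 ≤ q) (hγ : scalPart F ≠ 0)
    (hvert : ∀ᶠ P in 𝓝 0, (fderiv ℂ F P (0, 1)).1 = 0) :
    ∃ ψ H, IsFibAut ψ H ∧ F =ᶠ[𝓝 0] fibMap ψ H := by
  let i : Fin p := ⟨0, by lia⟩
  let j : Fin q := ⟨0, by lia⟩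
  have hpair := h.isPolPair h0
  have hbase := hpair.eventually_fst_eq_linPart hp hq hγ hvert
  have hbase' := eventually_starMap_fst_eq_linPart h.diff.self_of_nhds hbase
  obtain ⟨A, hA⟩ := hpair.exists_equiv_eq_linPart hγ
  obtain ⟨A', hA'⟩ := hpair.symm.exists_equiv_eq_linPart (by rwa [← hpair.scalPart_eq i j])
  have hpow := hpair.eventually_exp_scalPart_mul_polLog i j hbase hbase'
  simp only [← hA, ← hA'] at hpow
  refine ⟨A, fun _ => 0, isFibAut_of_genNormI_eq fun Z => Complex.ofReal_injective ?_, ?_⟩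
  · rw [← polNorm_star_self, ← polNorm_star_self,
      ← polNorm_map_map_of_polNorm_pow i j hγ hpow Z (star Z), hA', hA,
      linPart_starMap h.diff.self_of_nhds]
  · filter_upwards [hbase, hpair.eventually_snd_eq_mul i j hbase hbase'] with P hP hfibre
    rw [eq_one_of_polNorm_pow i j hγ hpow, mul_one] at hfibre
    exact Prod.ext (hP.trans (hA _).symm) (hfibre.trans (add_zero _).symm)

end LocalModel

section LocalRigidity

variable {p q : ℕ} {F Φ Φ' Φ₂ Φ₂' : CMat p q × ℂ → CMat p q × ℂ} {m : CMat p q × ℂ}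

lemma IsBundleAut.exists_isFibAut_of_conj (h : IsBundleAut Φ Φ') (h₂ : IsBundleAut Φ₂ Φ₂')
    (hF : PreservesAt F m) (hconj : ∃ ψ H, IsFibAut ψ H ∧ (Φ₂ ∘ F ∘ Φ') =ᶠ[𝓝 (Φ m)] fibMap ψ H) :
    ∃ ψ H, IsFibAut ψ H ∧ F =ᶠ[𝓝 m] fibMap ψ H := by
  obtain ⟨ψ, H, hψ, heq⟩ := hconj
  obtain ⟨ψ₁, H₁, hψ₁, hΦ⟩ := h.fib
  obtain ⟨ψ₂, H₂, hψ₂, hΦ₂'⟩ := h₂.fib'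
  refine ⟨_, _, hψ₂.comp (hψ.comp hψ₁), ?_⟩
  filter_upwards [eventually_fst_mem_typeIDomain hF.mem.1, hF.eventually_fst_apply_mem,
    (h.differentiableAt hF.mem.1).continuousAt.eventually heq] with P hP hFP hconjP
  simp only [Function.comp_apply, h.left_inv P hP] at hconjP
  rw [← fibMap_fibMap, ← fibMap_fibMap, ← hΦ, ← hΦ₂', ← hconjP, h₂.left_inv _ hFP]

lemma IsNormalization.not_eventually_eq (h : IsNormalization F m Φ Φ' Φ₂ Φ₂')
    (hF : PreservesAt F m) (hconst : ¬ ∀ᶠ P in 𝓝 m, F P = F m) :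
    ¬ ∀ᶠ P in 𝓝 0, (Φ₂ ∘ F ∘ Φ') P = (Φ₂ ∘ F ∘ Φ') 0 := by
  refine fun hconj => hconst ?_
  rw [← h.map_source] at hconj
  filter_upwards [(h.source.differentiableAt hF.mem.1).continuousAt.eventually hconj,
    eventually_fst_mem_typeIDomain hF.mem.1, hF.eventually_fst_apply_mem] with P hP hPmem hFP
  simp only [Function.comp_apply, h.source.left_inv P hPmem, h.source.left_inv m hF.mem.1] at hP
  rw [← h.target.left_inv _ hFP, hP, h.target.left_inv _ hF.apply_mem.1]

namespace PreservesAt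

lemma exists_isFibAut_of_not_vanishesAt (h : PreservesAt F m) (hp : 2 ≤ p) (hq : 2 ≤ q)
    (hv : ¬ VanishesAt F m) : ∃ ψ H, IsFibAut ψ H ∧ F =ᶠ[𝓝 m] fibMap ψ H := by
  obtain ⟨Φ, Φ', Φ₂, Φ₂', hΦ⟩ := h.exists_isNormalization
  have hG := hΦ.preservesAt h
  have hG0 := hΦ.map_zero h.mem.1
  have hne := mt (hΦ.vanishesAt h) hv
  obtain ⟨hγ, -⟩ := (hG.fderiv_eq_zero_or hG0 hp hq).resolve_left hne
  obtain ⟨X, hX⟩ := not_forall.1 hne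
  refine hΦ.source.exists_isFibAut_of_conj hΦ.target h ?_
  rw [hΦ.map_source]
  exact hG.exists_isFibAut_eventuallyEq_fibMap hG0 hp hq hγ
    (hG.eventually_fderiv_fst_eq_zero hp hq hX)

theorem frequently_exists_isFibAut (h : PreservesAt F m) (hp : 2 ≤ p) (hq : 2 ≤ q)
    (hconst : ¬ ∀ᶠ P in 𝓝 m, F P = F m) :
    ∃ᶠ P in 𝓝 m, ∃ ψ H, IsFibAut ψ H ∧ F =ᶠ[𝓝 P] fibMap ψ H := by
  obtain ⟨Φ, Φ', Φ₂, Φ₂', hΦ⟩ := h.exists_isNormalization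
  have hG := hΦ.preservesAt h
  have hΦ' : Tendsto Φ' (𝓝 0) (𝓝 m) := hΦ.map_source ▸ hΦ.source.tendsto_symm h.mem.1
  have hnonvanishing := hG.frequently_not_vanishesAt ⟨0, by lia⟩ ⟨0, by lia⟩
    (hΦ.not_eventually_eq h hconst)
  refine hΦ'.frequently ((hnonvanishing.and_eventually
    (hG.eventually.and (hΦ'.eventually h.eventually))).mono ?_)
  rintro P ⟨⟨hP, hv⟩, hGP, hFP⟩
  refine hΦ.source.exists_isFibAut_of_conj hΦ.target
    (hFP (hΦ.source.symm.mapsTo_logBundle hP)) ?_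
  rw [hΦ.source.right_inv P hP.1]
  exact (hGP hP).exists_isFibAut_of_not_vanishesAt hp hq hv

end PreservesAt

end LocalRigidity

section FibreExponential

variable {p q : ℕ} {lam : ℝ}

/-- The fibrewise exponential, which pulls the circle bundle `|ξ|² = N(Z) ^ lam` back to the
hypersurface `2 Re ω = log N(Z)`. -/
def expMap (lam : ℝ) (P : CMat p q × ℂ) : CMat p q × ℂ := (P.1, cexp (lam * P.2))

/-- The branch of the inverse of `ω ↦ exp (lam * ω)` that takes the value `a` at
`exp (lam * a)`; it is holomorphic near that point only. -/
def fibLog (lam : ℝ) (a ξ : ℂ) : ℂ := a + log (ξ / cexp (lam * a)) / lam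

lemma exp_fibLog (hlam : lam ≠ 0) (a : ℂ) {ξ : ℂ} (hξ : ξ ≠ 0) :
    cexp (lam * fibLog lam a ξ) = ξ := by
  rw [fibLog, mul_add, mul_div_cancel₀ _ (ofReal_ne_zero.2 hlam), Complex.exp_add,
    exp_log (div_ne_zero hξ (Complex.exp_ne_zero _)), mul_div_cancel₀ _ (Complex.exp_ne_zero _)]

lemma fibLog_exp (a : ℂ) : fibLog lam a (cexp (lam * a)) = a := by
  rw [fibLog, div_self (Complex.exp_ne_zero _), log_one, zero_div, add_zero]

lemma eventually_differentiableAt_fibLog (a : ℂ) :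
    ∀ᶠ ξ in 𝓝 (cexp (lam * a)), DifferentiableAt ℂ (fibLog lam a) ξ := by
  have hdiv : Tendsto (fun ξ : ℂ => ξ / cexp (lam * a)) (𝓝 (cexp (lam * a))) (𝓝 1) :=
    Continuous.tendsto' (by fun_prop) _ _ (div_self (Complex.exp_ne_zero _))
  filter_upwards [hdiv.eventually (isOpen_slitPlane.mem_nhds one_mem_slitPlane)] with ξ hξ
  exact (((differentiableAt_id.div_const _).clog hξ).div_const _).const_add a

lemma differentiable_expMap : Differentiable ℂ (expMap (p := p) (q := q) lam) := by
  unfold expMap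
  fun_prop

lemma exists_expMap_eq (hlam : lam ≠ 0) {x : CMat p q × ℂ} (hx : x.2 ≠ 0) :
    ∃ P, expMap lam P = x :=
  ⟨(x.1, fibLog lam 0 x.2), Prod.ext rfl (exp_fibLog hlam 0 hx)⟩

lemma normSq_exp (z : ℂ) : normSq (cexp z) = Real.exp (2 * z.re) := by
  rw [normSq_eq_norm_sq, norm_exp, ← Real.exp_nat_mul, Nat.cast_ofNat]

lemma genNormI_rpow {Z : CMat p q} (hZ : Z ∈ typeIDomain p q) :
    genNormI Z ^ lam = Real.exp (lam * Real.log (genNormI Z)) := by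
  rw [Real.rpow_def_of_pos (genNormI_pos hZ), mul_comm]

lemma expMap_mem_iff (hlam : lam ≠ 0) {P : CMat p q × ℂ} :
    expMap lam P ∈ circTypeIPow p q lam ↔ P ∈ logBundle p q := by
  refine and_congr_right fun (hP : P.1 ∈ typeIDomain p q) => ?_
  simp only [expMap]
  rw [normSq_exp, genNormI_rpow hP, Real.exp_eq_exp, re_ofReal_mul, mul_left_comm]
  exact mul_right_inj' hlam

lemma snd_ne_zero_of_mem {x : CMat p q × ℂ} (hx : x ∈ circTypeIPow p q lam) : x.2 ≠ 0 := by
  rw [← normSq_pos, hx.2]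
  exact Real.rpow_pos_of_pos (genNormI_pos hx.1) lam

lemma tendsto_fibLog_section (P : CMat p q × ℂ) :
    Tendsto (fun x : CMat p q × ℂ => (x.1, fibLog lam P.2 x.2)) (𝓝 (expMap lam P)) (𝓝 P) := by
  have hlog : ContinuousAt (fibLog lam P.2) (expMap lam P).2 :=
    (eventually_differentiableAt_fibLog P.2).self_of_nhds.continuousAt
  have hsection := continuousAt_fst.prodMk (ContinuousAt.comp hlog continuousAt_snd)
  simpa only [ContinuousAt, Function.comp_def, expMap, fibLog_exp] using hsection

lemma eventually_expMap_section (hlam : lam ≠ 0) (P : CMat p q × ℂ) :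
    ∀ᶠ x in 𝓝 (expMap lam P), expMap lam (x.1, fibLog lam P.2 x.2) = x := by
  filter_upwards [continuousAt_snd.eventually_ne (Complex.exp_ne_zero (lam * P.2))] with x hx
  exact Prod.ext rfl (exp_fibLog hlam P.2 hx)

lemma IsFibAut.genNormI_rpow_eq {ψ : CMat p q → CMat p q} {H : CMat p q → ℂ} (h : IsFibAut ψ H)
    {Z : CMat p q} (hZ : Z ∈ typeIDomain p q) :
    genNormI (ψ Z) ^ lam = normSq (cexp (lam * H Z)) * genNormI Z ^ lam := by
  rw [genNormI_rpow (h.1.2.1 hZ), genNormI_rpow hZ, normSq_exp, ← Real.exp_add, h.2.2 Z hZ,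
    re_ofReal_mul]
  ring_nf

lemma expMap_fibMap (ψ : CMat p q → CMat p q) (H : CMat p q → ℂ) (P : CMat p q × ℂ) :
    expMap lam (fibMap ψ H P) = (ψ P.1, (expMap lam P).2 * cexp (lam * H P.1)) := by
  rw [expMap, expMap, fibMap, mul_add, Complex.exp_add]

lemma exists_preservesAt_lift (hlam : lam ≠ 0) {U : Set (CMat p q × ℂ)} (hU : IsOpen U)
    {F : CMat p q × ℂ → CMat p q × ℂ} (hF : DifferentiableOn ℂ F U)
    (hFmap : MapsTo F (U ∩ circTypeIPow p q lam) (circTypeIPow p q lam))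
    {m : CMat p q × ℂ} (hm : expMap lam m ∈ U ∩ circTypeIPow p q lam) :
    ∃ G, PreservesAt G m ∧ ∀ᶠ P in 𝓝 m, expMap lam (G P) = F (expMap lam P) := by
  obtain ⟨P₀, hP₀⟩ := exists_expMap_eq hlam (snd_ne_zero_of_mem (hFmap hm))
  have hmem : ∀ᶠ P in 𝓝 m, expMap lam P ∈ U :=
    differentiable_expMap.continuous.continuousAt.eventually (hU.mem_nhds hm.1)
  have hdiff : ∀ᶠ P in 𝓝 m, DifferentiableAt ℂ (fun P => F (expMap lam P)) P := by
    filter_upwards [hmem] with P hP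
    exact DifferentiableAt.comp P (g := F) (hF.differentiableAt (hU.mem_nhds hP))
      (differentiable_expMap P)
  have hlim : Tendsto (fun P => F (expMap lam P)) (𝓝 m) (𝓝 (expMap lam P₀)) :=
    hP₀ ▸ hdiff.self_of_nhds.continuousAt
  have hlift := hlim.eventually (eventually_expMap_section hlam P₀)
  refine ⟨fun P => ((F (expMap lam P)).1, fibLog lam P₀.2 (F (expMap lam P)).2),
    ⟨(expMap_mem_iff hlam).1 hm.2, ?_, ?_⟩, hlift⟩
  · filter_upwards [hdiff, hlim.snd_nhds.eventually (eventually_differentiableAt_fibLog P₀.2)]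
      with P hP hlog
    exact hP.fst.prodMk (DifferentiableAt.comp P (g := fibLog lam P₀.2) hlog hP.snd)
  · filter_upwards [hmem, hlift] with P hPU hP hPmem
    rw [← expMap_mem_iff hlam, hP]
    exact hFmap ⟨hPU, (expMap_mem_iff hlam).2 hPmem⟩

section Descent

variable {F G : CMat p q × ℂ → CMat p q × ℂ} {P : CMat p q × ℂ}

lemma eventually_eq_of_lift_eq (hlam : lam ≠ 0)
    (hlift : ∀ᶠ P' in 𝓝 P, expMap lam (G P') = F (expMap lam P'))
    (hG : ∀ᶠ P' in 𝓝 P, G P' = G P) : ∀ᶠ x in 𝓝 (expMap lam P), F x = F (expMap lam P) := by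
  filter_upwards [(tendsto_fibLog_section P).eventually (hlift.and hG),
    eventually_expMap_section hlam P] with x ⟨hF, hconst⟩ hsection
  rw [← hlift.self_of_nhds, ← hconst, hF, hsection]

lemma eventually_eq_of_lift_eq_fibMap {ψ : CMat p q → CMat p q} {H : CMat p q → ℂ}
    (hlam : lam ≠ 0)
    (hlift : ∀ᶠ P' in 𝓝 P, expMap lam (G P') = F (expMap lam P')) (hG : G =ᶠ[𝓝 P] fibMap ψ H) :
    ∀ᶠ x in 𝓝 (expMap lam P), F x = (ψ x.1, x.2 * cexp (lam * H x.1)) := by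
  filter_upwards [(tendsto_fibLog_section P).eventually (hlift.and hG),
    eventually_expMap_section hlam P] with x ⟨hF, hfib⟩ hsection
  rw [hsection, hfib, expMap_fibMap, hsection] at hF
  exact hF.symm

end Descent

end FibreExponential

theorem typeI_power_circle_bundle_rigidity_general {p q : ℕ} (hp : 2 ≤ p) (hq : 2 ≤ q)
    {lam : ℝ} (hlam : lam ≠ 0) {U : Set (CMat p q × ℂ)} (hU : IsOpen U) (hUconn : IsPreconnected U)
    (hUM : (U ∩ circTypeIPow p q lam).Nonempty) {F : CMat p q × ℂ → CMat p q × ℂ}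
    (hF : DifferentiableOn ℂ F U) (hFnc : ¬ ∃ c, EqOn F (fun _ => c) U)
    (hFmap : MapsTo F (U ∩ circTypeIPow p q lam) (circTypeIPow p q lam)) :
    ∃ (ψ : CMat p q → CMat p q) (h : CMat p q → ℂ),
      Biholo ψ (typeIDomain p q) (typeIDomain p q) ∧
      DifferentiableOn ℂ h (typeIDomain p q) ∧
      (∀ Z ∈ typeIDomain p q, h Z ≠ 0) ∧
      (∀ Z ∈ typeIDomain p q, genNormI (ψ Z) ^ lam = normSq (h Z) * genNormI Z ^ lam) ∧
      ∃ V : Set (CMat p q × ℂ), IsOpen V ∧ V.Nonempty ∧ V ⊆ U ∧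
        EqOn F (fun P => (ψ P.1, P.2 * h P.1)) V := by
  obtain ⟨x, hxU, hxM⟩ := hUM
  obtain ⟨m, rfl⟩ := exists_expMap_eq hlam (snd_ne_zero_of_mem hxM)
  obtain ⟨G, hG, hlift⟩ := exists_preservesAt_lift hlam hU hF hFmap ⟨hxU, hxM⟩
  have hGnc : ¬ ∀ᶠ P in 𝓝 m, G P = G m := fun hconst =>
    hFnc ⟨_, eqOn_of_preconnected_of_eventuallyEq hU hUconn hF (differentiableOn_const _) hxU
      (eventually_eq_of_lift_eq hlam hlift hconst)⟩
  have hnear : ∀ᶠ P in 𝓝 m, expMap lam P ∈ U :=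
    differentiable_expMap.continuous.continuousAt.eventually (hU.mem_nhds hxU)
  obtain ⟨P, ⟨ψ, H, hψ, hGP⟩, hPU, hliftP⟩ := ((hG.frequently_exists_isFibAut hp hq
    hGnc).and_eventually (hnear.and hlift.eventually_nhds)).exists
  obtain ⟨V, hV, hVopen, hPV⟩ := _root_.mem_nhds_iff.1
    ((hU.eventually_mem hPU).and (eventually_eq_of_lift_eq_fibMap hlam hliftP hGP))
  exact ⟨ψ, fun Z => cexp (lam * H Z), hψ.1, (hψ.2.1.const_mul _).cexp,
    fun Z _ => Complex.exp_ne_zero _, fun Z hZ => hψ.genNormI_rpow_eq hZ,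
    V, hVopen, ⟨_, hPV⟩, fun x hx => (hV hx).1, fun x hx => (hV hx).2⟩

end

/-- Corollary 1.6 of the paper specialized to `Ω₁ = Ω₂ = D^I_{p,q}`, `min(p,q) ≥ 2`:
a nonconstant holomorphic map defined near a piece of `M = {|ξ|² = N(Z)^λ}` sending the
piece into `M` coincides, on a nonempty open set, with a norm-preserving holomorphic
isomorphism `(Z,ξ) ↦ (ψ(Z), ξ·h(Z))` with `ψ ∈ Aut(Ω)`, `h` holomorphic nowhere zero,
and `N(ψ(Z))^λ = |h(Z)|² N(Z)^λ` on `Ω`. -/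
theorem typeI_power_circle_bundle_rigidity (p q : ℕ) (hpq : 2 ≤ min p q)
    (lam : ℝ) (hlam : 0 < lam)
    (U : Set ((Fin p → Fin q → ℂ) × ℂ)) (hUopen : IsOpen U) (hUconn : IsConnected U)
    (hUM : (U ∩ circTypeIPow p q lam).Nonempty)
    (F : ((Fin p → Fin q → ℂ) × ℂ) → ((Fin p → Fin q → ℂ) × ℂ))
    (hF : DifferentiableOn ℂ F U)
    (hFnc : ¬ ∃ c, Set.EqOn F (fun _ => c) U)
    (hFmap : Set.MapsTo F (U ∩ circTypeIPow p q lam) (circTypeIPow p q lam)) :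
    ∃ (ψ : (Fin p → Fin q → ℂ) → (Fin p → Fin q → ℂ)) (h : (Fin p → Fin q → ℂ) → ℂ),
      Biholo ψ (typeIDomain p q) (typeIDomain p q) ∧
      DifferentiableOn ℂ h (typeIDomain p q) ∧
      (∀ Z ∈ typeIDomain p q, h Z ≠ 0) ∧
      (∀ Z ∈ typeIDomain p q,
        genNormI (ψ Z) ^ lam = Complex.normSq (h Z) * genNormI Z ^ lam) ∧
      ∃ V : Set ((Fin p → Fin q → ℂ) × ℂ), IsOpen V ∧ V.Nonempty ∧ V ⊆ U ∧
        Set.EqOn F (fun P => (ψ P.1, P.2 * h P.1)) V :=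
  typeI_power_circle_bundle_rigidity_general (le_min_iff.1 hpq).1 (le_min_iff.1 hpq).2 hlam.ne'
    hUopen hUconn.isPreconnected hUM hF hFnc hFmap
end
end
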